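/- arXiv:quant-ph/0407227 — 9 statements merged into one kernel-verified Lean document; each statement's English description precedes it below -/
import Mathlib

section
/- Let P_{12}, P_{13}, P_{23} be three equimarginal two-variable probability distributions on three binary variables (viewed as functions of (x,y,z) ∈ {0,1}^3 constant in the absent variable), with common one-variable marginals P_1, P_2, P_3. Define Δ = 1 − P_1 − P_2 − P_3 + P_{12} + P_{13} + P_{23}. Then P_{12}, P_{13}, P_{23} are the two-variable marginals of a single probability distribution P on {0,1}^3 if and only if 0 ≤ Δ(x,y,z) ≤ 1 for all x,y,z ∈ {0,1}. -/
/-- Theorem 1 of the paper, Wigner–Pitowsky.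
Three equimarginal two-variable probability distributions `P12, P13, P23` on three
binary variables (viewed as functions on `Bool × Bool × Bool` constant in the absent
variable), with common one-variable marginals `P1, P2, P3`, are the two-variable
marginals of a single probability distribution `P` on `{0,1}³` if and only if
`0 ≤ Δ(x,y,z) ≤ 1` for all `x,y,z`, where
`Δ = 1 - P1 - P2 - P3 + P12 + P13 + P23`. -/
theorem stmt_0
    (P12 P13 P23 P1 P2 P3 : Bool → Bool → Bool → ℝ)
    -- P12 is a probability distribution on variables {1,2}
    (h12nn : ∀ x y z, 0 ≤ P12 x y z)
    (h12const : ∀ x y z z', P12 x y z = P12 x y z')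
    (h12sum : ∀ z, ∑ x : Bool, ∑ y : Bool, P12 x y z = 1)
    -- P13 is a probability distribution on variables {1,3}
    (h13nn : ∀ x y z, 0 ≤ P13 x y z)
    (h13const : ∀ x y y' z, P13 x y z = P13 x y' z)
    (h13sum : ∀ y, ∑ x : Bool, ∑ z : Bool, P13 x y z = 1)
    -- P23 is a probability distribution on variables {2,3}
    (h23nn : ∀ x y z, 0 ≤ P23 x y z)
    (h23const : ∀ x x' y z, P23 x y z = P23 x' y z)
    (h23sum : ∀ x, ∑ y : Bool, ∑ z : Bool, P23 x y z = 1)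
    -- the common one-variable marginals are constant in the absent variables
    (hP1const : ∀ x y z y' z', P1 x y z = P1 x y' z')
    (hP2const : ∀ x y z x' z', P2 x y z = P2 x' y z')
    (hP3const : ∀ x y z x' y', P3 x y z = P3 x' y' z)
    -- equimarginality
    (hP1a : ∀ x y z, P12 x y z + P12 x (!y) z = P1 x y z)
    (hP1b : ∀ x y z, P13 x y z + P13 x y (!z) = P1 x y z)
    (hP2a : ∀ x y z, P12 x y z + P12 (!x) y z = P2 x y z)
    (hP2b : ∀ x y z, P23 x y z + P23 x y (!z) = P2 x y z)
    (hP3a : ∀ x y z, P13 x y z + P13 (!x) y z = P3 x y z)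
    (hP3b : ∀ x y z, P23 x y z + P23 x (!y) z = P3 x y z) :
    (∃ P : Bool → Bool → Bool → ℝ,
        (∀ x y z, 0 ≤ P x y z) ∧
        (∑ x : Bool, ∑ y : Bool, ∑ z : Bool, P x y z) = 1 ∧
        (∀ x y z, P x y false + P x y true = P12 x y z) ∧
        (∀ x y z, P x false z + P x true z = P13 x y z) ∧
        (∀ x y z, P false y z + P true y z = P23 x y z)) ↔
      (∀ x y z,
        0 ≤ 1 - P1 x y z - P2 x y z - P3 x y z + P12 x y z + P13 x y z + P23 x y z ∧
        1 - P1 x y z - P2 x y z - P3 x y z + P12 x y z + P13 x y z + P23 x y z ≤ 1) := by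
  -- reduce everything to functions of two variables
  obtain ⟨a, ha⟩ : ∃ a : Bool → Bool → ℝ, ∀ x y z, P12 x y z = a x y :=
    ⟨fun x y => P12 x y false, fun x y z => h12const x y z false⟩
  obtain ⟨b, hb⟩ : ∃ b : Bool → Bool → ℝ, ∀ x y z, P13 x y z = b x z :=
    ⟨fun x z => P13 x false z, fun x y z => h13const x y false z⟩
  obtain ⟨c, hc⟩ : ∃ c : Bool → Bool → ℝ, ∀ x y z, P23 x y z = c y z :=
    ⟨fun y z => P23 false y z, fun x y z => h23const x false y z⟩
  have e1 : ∀ x y z, P1 x y z = a x false + a x true := by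
    intro x y z
    rw [← hP1a x y z, ha, ha]
    cases y <;> simp [add_comm]
  have e1' : ∀ x, a x false + a x true = b x false + b x true := by
    intro x
    have h := hP1b x false false
    rw [e1, hb, hb] at h
    simpa using h.symm
  have e2 : ∀ x y z, P2 x y z = a false y + a true y := by
    intro x y z
    rw [← hP2a x y z, ha, ha]
    cases x <;> simp [add_comm]
  have e2' : ∀ y, a false y + a true y = c y false + c y true := by
    intro y
    have h := hP2b false y false
    rw [e2, hc, hc] at h
    simpa using h.symm
  have e3 : ∀ x y z, P3 x y z = b false z + b true z := by
    intro x y z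
    rw [← hP3a x y z, hb, hb]
    cases x <;> simp [add_comm]
  have e3' : ∀ z, b false z + b true z = c false z + c true z := by
    intro z
    have h := hP3b false false z
    rw [e3, hc, hc] at h
    simpa using h.symm
  have an : ∀ x y, 0 ≤ a x y := fun x y => ha x y false ▸ h12nn x y false
  have bn : ∀ x z, 0 ≤ b x z := fun x z => hb x false z ▸ h13nn x false z
  have cn : ∀ y z, 0 ≤ c y z := fun y z => hc false y z ▸ h23nn false y z
  have s := h12sum false
  simp only [ha, hb, hc, e1, e2, e3, Fintype.sum_bool] at s ⊢
  clear hP1a hP1b hP2a hP2b hP3a hP3b hP1const hP2const hP3const h12nn h13nn h23nn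
    h12const h13const h23const h12sum h13sum h23sum
  simp only [Bool.forall_bool] at e1' e2' e3' an bn cn
  obtain ⟨e1f, e1t⟩ := e1'
  obtain ⟨e2f, e2t⟩ := e2'
  obtain ⟨e3f, e3t⟩ := e3'
  obtain ⟨⟨a1, a2⟩, a3, a4⟩ := an
  obtain ⟨⟨b1, b2⟩, b3, b4⟩ := bn
  obtain ⟨⟨c1, c2⟩, c3, c4⟩ := cn
  constructor
  · rintro ⟨P, hn, hs, h1, h2, h3⟩
    simp only [Bool.forall_bool] at hn h1 h2 h3 ⊢
    refine ⟨⟨⟨⟨?_, ?_⟩, ?_, ?_⟩, ⟨?_, ?_⟩, ?_, ?_⟩, ⟨⟨?_, ?_⟩, ?_, ?_⟩, ⟨?_, ?_⟩, ?_, ?_⟩ <;>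
      linarith
  · intro h
    simp only [Bool.forall_bool] at h
    -- the free parameter `t = P(0,0,0)`, squeezed between lower and upper bounds
    obtain ⟨t, l1, l2, l3, l4, u1, u2, u3, u4⟩ : ∃ t : ℝ, 0 ≤ t ∧
        b false false - a false true ≤ t ∧ c false false - a true false ≤ t ∧
        c false false - b true false ≤ t ∧ t ≤ a false false ∧ t ≤ b false false ∧
        t ≤ c false false ∧ t ≤ a true true - b true false + c false false := by
      refine ⟨max (max 0 (b false false - a false true))
        (max (c false false - a true false) (c false false - b true false)),
        le_max_of_le_left (le_max_left _ _), le_max_of_le_left (le_max_right _ _),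
        le_max_of_le_right (le_max_left _ _), le_max_of_le_right (le_max_right _ _),
        ?_, ?_, ?_, ?_⟩ <;>
      refine max_le (max_le ?_ ?_) (max_le ?_ ?_) <;> linarith
    refine ⟨fun x y z => match x, y, z with
      | false, false, false => t
      | false, false, true => a false false - t
      | false, true, false => b false false - t
      | true, false, false => c false false - t
      | false, true, true => a false true - b false false + t
      | true, false, true => a true false - c false false + t
      | true, true, false => b true false - c false false + t
      | true, true, true => a true true - b true false + c false false - t, ?_, ?_, ?_, ?_, ?_⟩
    · rintro (_ | _) (_ | _) (_ | _) <;> dsimp only <;> linarith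
    · dsimp only
      linarith
    · rintro (_ | _) (_ | _) - <;> dsimp only <;> linarith
    · rintro (_ | _) - (_ | _) <;> dsimp only <;> linarith
    · rintro - (_ | _) (_ | _) <;> dsimp only <;> linarith
end

section
/- Let (P_A)_{A ⊊ N} be an equimarginal family of probability distributions on the proper subsets of N = {1,…,n}. Then the P_A are the marginals of a single probability distribution P on {0,1}^n if and only if for each subset A ⊆ N with an odd number of elements and all x ∈ {0,1}^n, 0 ≤ Σ_{B ⊊ N, A∪B = N} (−1)^{|A∩B|} P_B(x) ≤ 1 (where the term with B = ∅, which occurs only when A = N, uses P_∅ ≡ the constant function 1). -/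
/-- Flip the coordinates of `x ∈ {0,1}ⁿ` indexed by `A`. -/
def flipOn {n : ℕ} (A : Finset (Fin n)) (x : Fin n → Bool) : Fin n → Bool :=
  fun i => if i ∈ A then !(x i) else x i

/-- The bit-flip operator `κ_A`, the composite of the `κ_i` over `i ∈ A`:
`(κ_A f)(x) = f(x with coordinates in A flipped)`. -/
def kop {n : ℕ} (A : Finset (Fin n)) (f : (Fin n → Bool) → ℝ) : (Fin n → Bool) → ℝ :=
  fun x => f (flipOn A x)

/-- The operator `M_A`, the composite of the commuting operators
`(M_i f)(x) = f(x) + f(x with i-th coordinate flipped)` over `i ∈ A`;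
equivalently `(M_A f)(x) = Σ_{B ⊆ A} f(x with coordinates in B flipped)`. -/
def Mop {n : ℕ} (A : Finset (Fin n)) (f : (Fin n → Bool) → ℝ) : (Fin n → Bool) → ℝ :=
  fun x => ∑ B ∈ A.powerset, f (flipOn B x)

/-- A probability distribution on the subset `A ⊆ N` of the binary variables:
a nonnegative function on `{0,1}ⁿ`, constant in the coordinates outside `A`,
with `M_A P_A` the constant function 1. -/
def IsDistOn {n : ℕ} (A : Finset (Fin n)) (f : (Fin n → Bool) → ℝ) : Prop :=
  (∀ x, 0 ≤ f x) ∧ (∀ i, i ∉ A → kop {i} f = f) ∧ Mop A f = fun _ => (1 : ℝ)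

/-- A family `(P_A)_{A ⊊ N}` of distributions on the proper subsets of `N` is
equimarginal if `M_{B∖A} P_B = M_{C∖A} P_C` whenever `A ⊆ B ∩ C` with `B, C ⊊ N`. -/
def Equimarginal {n : ℕ} (P : Finset (Fin n) → (Fin n → Bool) → ℝ) : Prop :=
  ∀ A B C : Finset (Fin n), B ⊂ Finset.univ → C ⊂ Finset.univ → A ⊆ B → A ⊆ C →
    Mop (B \ A) (P B) = Mop (C \ A) (P C)

/-- The sign function `σ_A(x) = Π_{i∈A} (-1)^{x_i}`. -/
def sigmaFn {n : ℕ} (A : Finset (Fin n)) (x : Fin n → Bool) : ℝ :=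
  ∏ i ∈ A, (if x i then (-1 : ℝ) else 1)

theorem flipOn_insert {n : ℕ} (i : Fin n) (A : Finset (Fin n)) (hi : i ∉ A)
    (x : Fin n → Bool) : flipOn (insert i A) x = flipOn {i} (flipOn A x) := by
  funext j
  by_cases h : j = i
  · subst h; simp [flipOn, hi]
  · simp [flipOn, h]

theorem flipOn_flipOn {n : ℕ} (A : Finset (Fin n)) (x : Fin n → Bool) :
    flipOn A (flipOn A x) = x := by
  funext j
  by_cases h : j ∈ A <;> simp [flipOn, h]

theorem flipOn_empty' {n : ℕ} (x : Fin n → Bool) : flipOn ∅ x = x := by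
  funext j
  simp [flipOn]

theorem Mop_empty' {n : ℕ} (f : (Fin n → Bool) → ℝ) : Mop ∅ f = f := by
  funext x
  simp [Mop, flipOn_empty']

theorem Mop_single {n : ℕ} (i : Fin n) (f : (Fin n → Bool) → ℝ) (x : Fin n → Bool) :
    Mop {i} f x = f x + f (flipOn {i} x) := by
  have := Finset.sum_powerset_insert (s := (∅ : Finset (Fin n))) (a := i) (by simp)
    (fun B => f (flipOn B x))
  simpa [Mop, flipOn_empty'] using this

theorem Mop_insert {n : ℕ} (i : Fin n) (A : Finset (Fin n)) (hi : i ∉ A)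
    (f : (Fin n → Bool) → ℝ) : Mop (insert i A) f = Mop A (Mop {i} f) := by
  funext x
  have h := Finset.sum_powerset_insert hi (fun B => f (flipOn B x))
  have e : Mop (insert i A) f x = ∑ B ∈ (insert i A).powerset, f (flipOn B x) := rfl
  have e2 : Mop A (Mop {i} f) x = ∑ B ∈ A.powerset, Mop {i} f (flipOn B x) := rfl
  rw [e, e2, h, ← Finset.sum_add_distrib]
  refine Finset.sum_congr rfl fun B hB => ?_
  rw [Mop_single, flipOn_insert i B (fun hh => hi (Finset.mem_powerset.1 hB hh))]

theorem Mop_sub' {n : ℕ} (A : Finset (Fin n)) (f g : (Fin n → Bool) → ℝ) (x : Fin n → Bool) :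
    Mop A (fun y => f y - g y) x = Mop A f x - Mop A g x := by
  simp [Mop, Finset.sum_sub_distrib]

/-- `κ_A = Π_{i ∈ A} (M_i - 1)`, expanded. -/
theorem kappa_expand {n : ℕ} (A : Finset (Fin n)) : ∀ (f : (Fin n → Bool) → ℝ)
    (x : Fin n → Bool), f (flipOn A x) =
      ∑ C ∈ A.powerset, (-1 : ℝ) ^ (A.card + C.card) * Mop C f x := by
  induction A using Finset.induction_on with
  | empty => intro f x; simp [flipOn_empty', Mop_empty']
  | insert i A hi ih =>
    intro f x
    have h1 : f (flipOn (insert i A) x) =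
        (fun y => Mop {i} f y - f y) (flipOn A x) := by
      simp only [Mop_single]
      rw [flipOn_insert i A hi]; ring
    rw [h1.trans (ih (fun y => Mop {i} f y - f y) x), Finset.sum_powerset_insert hi, ← Finset.sum_add_distrib]
    refine Finset.sum_congr rfl fun C hC => ?_
    have hC' : i ∉ C := fun hh => hi (Finset.mem_powerset.1 hC hh)
    rw [Mop_sub', Finset.card_insert_of_notMem hi, Finset.card_insert_of_notMem hC',
      Mop_insert i C hC']
    ring

theorem sum_eq {n : ℕ} (P : Finset (Fin n) → (Fin n → Bool) → ℝ) (Q : (Fin n → Bool) → ℝ)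
    (hQ : ∀ A : Finset (Fin n), A ⊂ Finset.univ → Mop (Finset.univ \ A) Q = P A)
    (A : Finset (Fin n)) (hA : Odd A.card) (x : Fin n → Bool) :
    (∑ B ∈ Finset.univ.filter
        (fun B : Finset (Fin n) => B ⊂ Finset.univ ∧ A ∪ B = Finset.univ),
      (-1 : ℝ) ^ (A ∩ B).card * P B x) = Q x + Q (flipOn A x) := by
  have h := kappa_expand A Q x
  rw [← Finset.add_sum_erase _ _ (Finset.empty_mem_powerset A)] at h
  rw [Finset.card_empty, add_zero, hA.neg_one_pow, Mop_empty'] at h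
  rw [h]
  have : Q x + (-1 * Q x + ∑ C ∈ A.powerset.erase ∅, (-1 : ℝ) ^ (A.card + C.card) * Mop C Q x)
      = ∑ C ∈ A.powerset.erase ∅, (-1 : ℝ) ^ (A.card + C.card) * Mop C Q x := by ring
  rw [this]
  refine Finset.sum_bij' (fun B _ => Bᶜ) (fun B _ => Bᶜ) ?_ ?_ ?_ ?_ ?_
  · intro B hB
    simp only [Finset.mem_filter, Finset.mem_univ, true_and] at hB
    rw [Finset.mem_erase, Finset.mem_powerset]
    refine ⟨?_, ?_⟩
    · intro h0
      exact hB.1.ne (by simpa using h0)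
    · intro j hj
      have : j ∈ A ∪ B := by rw [hB.2]; simp
      rw [Finset.mem_compl] at hj
      rcases Finset.mem_union.1 this with h | h
      · exact h
      · exact absurd h hj
  · intro C hC
    rw [Finset.mem_erase, Finset.mem_powerset] at hC
    simp only [Finset.mem_filter, Finset.mem_univ, true_and]
    refine ⟨?_, ?_⟩
    · rw [Finset.ssubset_univ_iff]
      intro h0
      exact hC.1 (by simpa using h0)
    · ext j
      have := @hC.2 j
      simp only [Finset.mem_union, Finset.mem_compl, Finset.mem_univ, iff_true]
      tauto
  · intro B _; simp
  · intro B _; simp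
  · intro B hB
    simp only [Finset.mem_filter, Finset.mem_univ, true_and] at hB
    have e : Mop Bᶜ Q = P B := by
      rw [← hQ B hB.1, Finset.compl_eq_univ_sdiff]
    have hsub : Bᶜ ⊆ A := by
      intro j hj
      have : j ∈ A ∪ B := by rw [hB.2]; simp
      rw [Finset.mem_compl] at hj
      rcases Finset.mem_union.1 this with h | h
      · exact h
      · exact absurd h hj
    have hc : (A ∩ B).card + (Bᶜ).card = A.card := by
      have h2 : A ∩ B = A \ Bᶜ := by ext j; simp
      rw [h2, Finset.card_sdiff_add_card_eq_card hsub]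
    rw [e, ← hc, add_assoc, pow_add, ← two_mul, pow_mul]
    norm_num

/-- Fourier-free construction of a signed solution. -/
def suppOf {n : ℕ} (x : Fin n → Bool) : Finset (Fin n) := Finset.univ.filter (fun i => x i = true)

noncomputable def baseR {n : ℕ} (P : Finset (Fin n) → (Fin n → Bool) → ℝ)
    (C : Finset (Fin n)) : ℝ :=
  if C = ∅ then 0 else P Cᶜ (fun _ => false)

noncomputable def baseQ {n : ℕ} (P : Finset (Fin n) → (Fin n → Bool) → ℝ)
    (x : Fin n → Bool) : ℝ :=
  ∑ C ∈ (suppOf x).powerset, (-1 : ℝ) ^ ((suppOf x).card + C.card) * baseR P C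

theorem flipOn_suppOf {n : ℕ} (x : Fin n → Bool) : flipOn (suppOf x) (fun _ => false) = x := by
  funext j
  cases h : x j <;> simp [flipOn, suppOf, h]

theorem compl_ssub {n : ℕ} (i : Fin n) (C : Finset (Fin n)) (h : i ∈ C) :
    Cᶜ ⊂ Finset.univ := by
  rw [Finset.ssubset_univ_iff]
  intro h0
  have : i ∈ Cᶜ := by rw [h0]; simp
  simp [h] at this

theorem baseQ_marg_aux {n : ℕ} (P : Finset (Fin n) → (Fin n → Bool) → ℝ)
    (hequi : Equimarginal P) (i : Fin n) (x : Fin n → Bool) (hx : x i = false) :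
    baseQ P x + baseQ P (flipOn {i} x) = P {i}ᶜ x := by
  have hi : i ∉ suppOf x := by simp [suppOf, hx]
  have hs : suppOf (flipOn {i} x) = insert i (suppOf x) := by
    ext j
    by_cases h : j = i
    · subst h; simp [suppOf, flipOn, hx]
    · simp [suppOf, flipOn, h]
  have hk := kappa_expand (suppOf x) (P {i}ᶜ) (fun _ => false)
  rw [flipOn_suppOf] at hk
  rw [hk]
  unfold baseQ
  rw [hs, Finset.sum_powerset_insert hi, ← Finset.sum_add_distrib, ← Finset.sum_add_distrib]
  refine Finset.sum_congr rfl fun C hC => ?_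
  have hC' : i ∉ C := fun hh => hi (Finset.mem_powerset.1 hC hh)
  have hR : baseR P (insert i C) = Mop C (P {i}ᶜ) (fun _ => false) := by
    have h1 := hequi (insert i C)ᶜ (insert i C)ᶜ {i}ᶜ
      (compl_ssub i _ (by simp)) (compl_ssub i _ (by simp)) subset_rfl
      (by intro j; simp; tauto)
    rw [Finset.sdiff_self, Mop_empty'] at h1
    have h2 : ({i}ᶜ : Finset (Fin n)) \ (insert i C)ᶜ = C := by
      ext j
      by_cases h : j = i
      · subst h; simp [hC']
      · simp [h]
    rw [h2] at h1
    rw [← h1]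
    simp [baseR]
  rw [hR, Finset.card_insert_of_notMem hi, Finset.card_insert_of_notMem hC']
  ring

theorem marg_of_single {n : ℕ} (P : Finset (Fin n) → (Fin n → Bool) → ℝ)
    (hequi : Equimarginal P) (Q : (Fin n → Bool) → ℝ)
    (hQ : ∀ i, Mop {i} Q = P {i}ᶜ) (A : Finset (Fin n)) (hA : A ⊂ Finset.univ) :
    Mop (Finset.univ \ A) Q = P A := by
  obtain ⟨i, -, hi⟩ := Finset.exists_of_ssubset hA
  have h1 : Finset.univ \ A = insert i ({i}ᶜ \ A) := by
    ext j
    by_cases h : j = i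
    · subst h; simp [hi]
    · simp [h]
  rw [h1, Mop_insert i _ (by simp), hQ]
  have := hequi A A {i}ᶜ hA (compl_ssub i _ (by simp)) subset_rfl
    (by intro j hj; simp; rintro rfl; exact hi hj)
  rw [← this, Finset.sdiff_self, Mop_empty']

theorem sigma_flip {n : ℕ} (A : Finset (Fin n)) (x : Fin n → Bool) :
    sigmaFn Finset.univ (flipOn A x) = (-1) ^ A.card * sigmaFn Finset.univ x := by
  have : (-1 : ℝ) ^ A.card = ∏ i : Fin n, if i ∈ A then (-1 : ℝ) else 1 := by
    rw [Finset.prod_ite_mem]; simp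
  rw [this]
  unfold sigmaFn
  rw [← Finset.prod_mul_distrib]
  refine Finset.prod_congr rfl fun i _ => ?_
  by_cases h : i ∈ A <;> cases hx : x i <;> simp [flipOn, h, hx]

theorem sigma_cases {n : ℕ} (x : Fin n → Bool) :
    sigmaFn Finset.univ x = 1 ∨ sigmaFn Finset.univ x = -1 := by
  unfold sigmaFn
  refine Finset.prod_induction _ (fun r : ℝ => r = 1 ∨ r = -1) ?_ (Or.inl rfl) ?_
  · rintro a b (rfl | rfl) (rfl | rfl) <;> norm_num
  · intro i _
    by_cases h : x i = true <;> simp [h]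

theorem flip_diff {n : ℕ} (x y : Fin n → Bool) :
    flipOn (Finset.univ.filter (fun i => x i ≠ y i)) x = y := by
  funext j
  cases h : x j <;> cases h' : y j <;> simp [flipOn, h, h']

/-- Theorem 2 of the paper.  An equimarginal family `(P_A)_{A ⊊ N}` of
probability distributions on the proper subsets of `N = {1,…,n}` consists of the marginals
of a single probability distribution `P` on `{0,1}ⁿ` if and only if for each subset
`A ⊆ N` with an odd number of elements and all `x`,
`0 ≤ Σ_{B ⊊ N, A∪B = N} (-1)^{|A∩B|} P_B(x) ≤ 1`. -/
theorem stmt_3 (n : ℕ) (P : Finset (Fin n) → (Fin n → Bool) → ℝ)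
    (hdist : ∀ A : Finset (Fin n), A ⊂ Finset.univ → IsDistOn A (P A))
    (hequi : Equimarginal P) :
    (∃ Q : (Fin n → Bool) → ℝ, IsDistOn Finset.univ Q ∧
        ∀ A : Finset (Fin n), A ⊂ Finset.univ → Mop (Finset.univ \ A) Q = P A) ↔
      (∀ A : Finset (Fin n), Odd A.card → ∀ x : Fin n → Bool,
        0 ≤ (∑ B ∈ Finset.univ.filter
              (fun B : Finset (Fin n) => B ⊂ Finset.univ ∧ A ∪ B = Finset.univ),
            (-1 : ℝ) ^ (A ∩ B).card * P B x) ∧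
        (∑ B ∈ Finset.univ.filter
              (fun B : Finset (Fin n) => B ⊂ Finset.univ ∧ A ∪ B = Finset.univ),
            (-1 : ℝ) ^ (A ∩ B).card * P B x) ≤ 1) := by
  constructor
  · rintro ⟨Q, ⟨hpos, -, hsum⟩, hQ⟩ A hA x
    rw [sum_eq P Q hQ A hA x]
    refine ⟨add_nonneg (hpos _) (hpos _), ?_⟩
    have h1 : ∑ B ∈ (Finset.univ : Finset (Fin n)).powerset, Q (flipOn B x) = 1 :=
      congrFun hsum x
    rw [← h1]
    have hne : (∅ : Finset (Fin n)) ≠ A := by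
      rintro rfl
      simp at hA
    calc Q x + Q (flipOn A x) = ∑ B ∈ ({∅, A} : Finset (Finset (Fin n))), Q (flipOn B x) := by
          rw [Finset.sum_pair hne, flipOn_empty']
      _ ≤ _ := Finset.sum_le_sum_of_subset_of_nonneg (by intro B; simp)
          (fun B _ _ => hpos _)
  · intro H
    rcases Nat.eq_zero_or_pos n with hn | hn
    · subst hn
      refine ⟨fun _ => 1, ⟨fun _ => zero_le_one, fun i => i.elim0, ?_⟩, ?_⟩
      · funext x; simp [Mop]
      · intro A hA
        exact absurd (Subsingleton.elim A Finset.univ) hA.ne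
    have hbase : ∀ i, Mop {i} (baseQ P) = P {i}ᶜ := by
      intro i
      funext x
      rw [Mop_single]
      cases hx : x i with
      | false => exact baseQ_marg_aux P hequi i x hx
      | true =>
        have h1 := baseQ_marg_aux P hequi i (flipOn {i} x) (by simp [flipOn, hx])
        rw [flipOn_flipOn] at h1
        have h2 := congrFun ((hdist {i}ᶜ (compl_ssub i _ (by simp))).2.1 i (by simp)) x
        have h3 : P {i}ᶜ (flipOn {i} x) = P {i}ᶜ x := h2
        rw [add_comm, h1, h3]
    have hpair : ∀ x y : Fin n → Bool, sigmaFn Finset.univ x = 1 → sigmaFn Finset.univ y = -1 →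
        0 ≤ baseQ P x + baseQ P y := by
      intro x y hx hy
      have h1 := sigma_flip (Finset.univ.filter (fun i => x i ≠ y i)) x
      rw [flip_diff, hx, hy, mul_one] at h1
      have hodd : Odd (Finset.univ.filter (fun i => x i ≠ y i)).card := by
        rcases Nat.even_or_odd (Finset.univ.filter (fun i => x i ≠ y i)).card with h | h
        · rw [h.neg_one_pow] at h1; norm_num at h1
        · exact h
      have h2 := (H _ hodd x).1
      rw [sum_eq P (baseQ P) (marg_of_single P hequi _ hbase) _ hodd x, flip_diff] at h2
      exact h2
    obtain ⟨x₀, hx₀, hmin⟩ := Finset.exists_min_image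
      (Finset.univ.filter (fun x : Fin n → Bool => sigmaFn Finset.univ x = 1)) (baseQ P)
      ⟨fun _ => false, Finset.mem_filter.2 ⟨Finset.mem_univ _, by simp [sigmaFn]⟩⟩
    have hx₀' : sigmaFn Finset.univ x₀ = 1 := by simpa using hx₀
    have hQs : ∀ i, Mop {i} (fun x => baseQ P x - baseQ P x₀ * sigmaFn Finset.univ x)
        = P {i}ᶜ := by
      intro i
      rw [← hbase i]
      funext x
      rw [Mop_single, Mop_single, sigma_flip]
      simp
    have hmarg := marg_of_single P hequi _ hQs
    refine ⟨_, ⟨?_, ?_, ?_⟩, hmarg⟩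
    · intro x
      rcases sigma_cases x with h | h
      · have := hmin x (by simp [h])
        simp only [h]; linarith
      · have := hpair x₀ x hx₀' h
        simp only [h]; linarith
    · intro i hi
      exact absurd (Finset.mem_univ i) hi
    · have he : (∅ : Finset (Fin n)) ⊂ Finset.univ := by
        have := compl_ssub (⟨0, hn⟩ : Fin n) Finset.univ (by simp)
        simpa using this
      have h1 := hmarg ∅ he
      rw [Finset.sdiff_empty] at h1
      rw [h1, ← (hdist ∅ he).2.2, Mop_empty']
end

section
/- Let P be a probability distribution on {0,1}^n with marginals P_B = M_{N∖B} P, and let A ⊆ N = {1,…,n} have an odd number of elements. For x ∈ {0,1}^n let x′ denote x with the coordinates indexed by A flipped. Then Σ_{B ⊊ N, A∪B = N} (−1)^{|A∩B|} P_B(x) = P(x) + P(x′) (where the term with B = ∅, which occurs only when A = N, uses P_∅ ≡ the constant function 1). In particular 0 ≤ Σ_{B ⊊ N, A∪B = N} (−1)^{|A∩B|} P_B(x) ≤ 1. -/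
theorem mobius_aux {α : Type*} [DecidableEq α] (A : Finset α) :
    ∀ f : Finset α → ℝ,
      ∑ C ∈ A.powerset, (-1 : ℝ) ^ (A \ C).card * ∑ D ∈ C.powerset, f D = f A := by
  induction A using Finset.induction_on with
  | empty => intro f; simp
  | insert a A ha ih =>
    intro f
    rw [Finset.sum_powerset_insert ha, ← ih (fun D => f (insert a D)),
      ← Finset.sum_add_distrib]
    refine Finset.sum_congr rfl fun C hC => ?_
    have hCA := Finset.mem_powerset.1 hC
    have haC : a ∉ C := fun h => ha (hCA h)
    have h1 : (insert a A \ C).card = (A \ C).card + 1 := by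
      rw [Finset.insert_sdiff_of_notMem _ haC, Finset.card_insert_of_notMem]
      simp [ha]
    have h2 : insert a A \ insert a C = A \ C := by
      ext i
      simp only [Finset.mem_sdiff, Finset.mem_insert]
      by_cases hi : i = a
      · subst hi; simp [ha]
      · simp [hi]
    rw [h1, h2, Finset.sum_powerset_insert haC, pow_succ]
    ring

/-- For a probability distribution `P` on `{0,1}ⁿ` with marginals
`P_B = M_{N∖B} P` and a subset `A ⊆ N` with an odd number of elements,
`Σ_{B ⊊ N, A∪B = N} (-1)^{|A∩B|} P_B(x) = P(x) + P(x')`, where `x'` is `x` with the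
coordinates in `A` flipped (the term with `B = ∅` uses `P_∅ ≡ 1`, which is exactly
`M_N P`); in particular the sum lies in `[0,1]`. -/
theorem stmt_4 (n : ℕ) (P : (Fin n → Bool) → ℝ)
    (hnn : ∀ x, 0 ≤ P x) (hsum : ∑ x : Fin n → Bool, P x = 1)
    (A : Finset (Fin n)) (hA : Odd A.card) (x : Fin n → Bool) :
    (∑ B ∈ Finset.univ.filter
          (fun B : Finset (Fin n) => B ⊂ Finset.univ ∧ A ∪ B = Finset.univ),
        (-1 : ℝ) ^ (A ∩ B).card * Mop (Finset.univ \ B) P x)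
      = P x + P (flipOn A x) ∧
    0 ≤ (∑ B ∈ Finset.univ.filter
          (fun B : Finset (Fin n) => B ⊂ Finset.univ ∧ A ∪ B = Finset.univ),
        (-1 : ℝ) ^ (A ∩ B).card * Mop (Finset.univ \ B) P x) ∧
    (∑ B ∈ Finset.univ.filter
          (fun B : Finset (Fin n) => B ⊂ Finset.univ ∧ A ∪ B = Finset.univ),
        (-1 : ℝ) ^ (A ∩ B).card * Mop (Finset.univ \ B) P x) ≤ 1 := by
  have key : (∑ B ∈ Finset.univ.filter
          (fun B : Finset (Fin n) => B ⊂ Finset.univ ∧ A ∪ B = Finset.univ),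
        (-1 : ℝ) ^ (A ∩ B).card * Mop (Finset.univ \ B) P x)
      = P x + P (flipOn A x) := by
    have h := mobius_aux A (fun D => P (flipOn D x))
    rw [← Finset.add_sum_erase _ _ (Finset.empty_mem_powerset A)] at h
    have h0 : flipOn ∅ x = x := by funext i; simp [flipOn]
    simp only [Finset.sdiff_empty, hA.neg_one_pow, Finset.powerset_empty,
      Finset.sum_singleton, h0] at h
    have e : (∑ B ∈ Finset.univ.filter
          (fun B : Finset (Fin n) => B ⊂ Finset.univ ∧ A ∪ B = Finset.univ),
        (-1 : ℝ) ^ (A ∩ B).card * Mop (Finset.univ \ B) P x) =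
        ∑ C ∈ A.powerset.erase ∅, (-1 : ℝ) ^ (A \ C).card *
          ∑ D ∈ C.powerset, P (flipOn D x) := by
      refine Finset.sum_bij' (fun B _ => Bᶜ) (fun C _ => Cᶜ) ?_ ?_ ?_ ?_ ?_
      · intro B hB
        simp only [Finset.mem_filter, Finset.mem_univ, true_and, Finset.ssubset_univ_iff] at hB
        simp only [Finset.mem_erase, Finset.mem_powerset, ne_eq, Finset.compl_eq_empty_iff]
        refine ⟨hB.1, fun i hi => ?_⟩
        have : i ∈ A ∪ B := by rw [hB.2]; simp
        simp only [Finset.mem_union, Finset.mem_compl] at this hi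
        tauto
      · intro C hC
        simp only [Finset.mem_erase, Finset.mem_powerset, ne_eq] at hC
        simp only [Finset.mem_filter, Finset.mem_univ, true_and, Finset.ssubset_univ_iff,
          ne_eq, Finset.compl_eq_univ_iff]
        refine ⟨hC.1, ?_⟩
        ext i
        have := @hC.2 i
        simp only [Finset.mem_union, Finset.mem_compl, Finset.mem_univ, iff_true]
        tauto
      · intro B _; simp
      · intro C _; simp
      · intro B _
        have : A \ Bᶜ = A ∩ B := by ext i; simp
        rw [this, ← Finset.compl_eq_univ_sdiff]
        rfl
    rw [e]
    linarith
  have hne : x ≠ flipOn A x := by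
    obtain ⟨i, hi⟩ := Finset.card_pos.1 hA.pos
    intro h
    have := congrFun h i
    simp [flipOn, hi] at this
  rw [key]
  refine ⟨rfl, add_nonneg (hnn _) (hnn _), ?_⟩
  rw [← hsum, ← Finset.sum_pair hne]
  exact Finset.sum_le_sum_of_subset_of_nonneg (Finset.subset_univ _) fun y _ _ => hnn y
end

section
/- Let P be a probability distribution on {0,1}^n, and for B ⊆ N = {1,…,n} define the coefficient c_B = 2^{−n} Σ_{y ∈ {0,1}^n} P(y) σ_B(y), so that P = Σ_{B ⊆ N} c_B σ_B. Then for every A ⊆ N and every x ∈ {0,1}^n, c_A σ_A(x) = Σ_{B ⊆ A} (−1)^{|A|−|B|} 2^{|B|−n} P_B(x), where P_B = M_{N∖B} P is the marginal of P over B (with P_∅ ≡ the constant function 1). -/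
lemma sum_flipOn {n : ℕ} (x : Fin n → Bool) (f : (Fin n → Bool) → ℝ) :
    ∑ y : Fin n → Bool, f y = ∑ C : Finset (Fin n), f (flipOn C x) := by
  symm
  refine Finset.sum_bij' (fun C _ => flipOn C x)
    (fun y _ => Finset.univ.filter (fun i => y i ≠ x i)) ?_ ?_ ?_ ?_ ?_
  · simp
  · simp
  · intro C _
    ext i
    by_cases h : i ∈ C <;> simp [flipOn, h]
  · intro y _
    funext i
    cases hy : y i <;> cases hx : x i <;> simp [flipOn, hy, hx]
  · simp

lemma sigmaFn_flip_mul {n : ℕ} (A C : Finset (Fin n)) (x : Fin n → Bool) :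
    sigmaFn A (flipOn C x) * sigmaFn A x = ∏ i ∈ A, (if i ∈ C then (-1 : ℝ) else 1) := by
  unfold sigmaFn
  rw [← Finset.prod_mul_distrib]
  refine Finset.prod_congr rfl fun i _ => ?_
  by_cases h : i ∈ C <;> cases hx : x i <;> simp [flipOn, h, hx]

lemma Mop_compl {n : ℕ} (B : Finset (Fin n)) (P : (Fin n → Bool) → ℝ) (x : Fin n → Bool) :
    Mop (Finset.univ \ B) P x
      = ∑ C : Finset (Fin n), (∏ i ∈ B, (if i ∈ C then (0 : ℝ) else 1)) * P (flipOn C x) := by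
  unfold Mop
  rw [← Finset.sum_subset (Finset.subset_univ (Finset.univ \ B).powerset)]
  · refine Finset.sum_congr rfl fun C hC => ?_
    rw [Finset.prod_eq_one, one_mul]
    intro i hi
    rw [if_neg]
    intro hc
    have := Finset.mem_powerset.1 hC hc
    simp [hi] at this
  · intro C _ hC
    rw [Finset.mem_powerset, Finset.not_subset] at hC
    obtain ⟨i, hi, hB⟩ := hC
    have hB' : i ∈ B := by simpa using hB
    rw [Finset.prod_eq_zero hB' (by simp [hi]), zero_mul]

lemma coef_identity {n : ℕ} (A C : Finset (Fin n)) :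
    ∏ i ∈ A, (if i ∈ C then (-1 : ℝ) else 1)
      = ∑ B ∈ A.powerset, (-1 : ℝ) ^ (A.card - B.card) * 2 ^ B.card *
          ∏ i ∈ B, (if i ∈ C then (0 : ℝ) else 1) := by
  have h : ∀ i ∈ A, (if i ∈ C then (-1 : ℝ) else 1)
      = 2 * (if i ∈ C then (0 : ℝ) else 1) + (-1) := by
    intro i _
    split_ifs <;> norm_num
  rw [Finset.prod_congr rfl h, Finset.prod_add]
  refine Finset.sum_congr rfl fun B hB => ?_
  rw [Finset.prod_mul_distrib, Finset.prod_const, Finset.prod_const,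
    Finset.card_sdiff_of_subset (Finset.mem_powerset.1 hB)]
  ring

/-- For a probability distribution `P` on `{0,1}ⁿ` with Fourier
coefficients `c_B = 2⁻ⁿ Σ_y P(y) σ_B(y)` (so that `P = Σ_B c_B σ_B`), one has for every
`A ⊆ N` and every `x`:
`c_A σ_A(x) = Σ_{B ⊆ A} (-1)^{|A|-|B|} 2^{|B|-n} P_B(x)`,
where `P_B = M_{N∖B} P` is the marginal of `P` over `B` (with `P_∅ ≡ 1 = M_N P`). -/
theorem stmt_6 (n : ℕ) (P : (Fin n → Bool) → ℝ)
    (hnn : ∀ x, 0 ≤ P x) (hsum : ∑ x : Fin n → Bool, P x = 1)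
    (A : Finset (Fin n)) (x : Fin n → Bool) :
    ((∑ y : Fin n → Bool, P y * sigmaFn A y) / 2 ^ n) * sigmaFn A x
      = ∑ B ∈ A.powerset,
          (-1 : ℝ) ^ (A.card - B.card) * (2 ^ B.card / 2 ^ n) *
            Mop (Finset.univ \ B) P x := by
  simp_rw [Mop_compl, Finset.mul_sum]
  rw [Finset.sum_comm, sum_flipOn x, div_mul_eq_mul_div, Finset.sum_mul, Finset.sum_div]
  refine Finset.sum_congr rfl fun C _ => ?_
  rw [mul_assoc, sigmaFn_flip_mul, coef_identity, Finset.mul_sum, Finset.sum_div]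
  refine Finset.sum_congr rfl fun B _ => ?_
  ring
end

section
/- Let (P_A)_{A ⊊ N} be an equimarginal family of probability distributions on the proper subsets of N = {1,…,n} which satisfies, for every subset A ⊆ N with an odd number of elements and all x ∈ {0,1}^n, the inequalities 0 ≤ Σ_{B ⊊ N, A∪B = N} (−1)^{|A∩B|} P_B(x) ≤ 1 (with P_∅ ≡ the constant function 1). Then the function Q = Σ_{B ⊊ N} (−1)^{n−|B|−1} 2^{|B|−n} P_B satisfies −2^{−n} ≤ Q(x) ≤ 1 − 2^{−n} for all x ∈ {0,1}^n. -/
lemma coef_aux {n : ℕ} (B : Finset (Fin n)) :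
    ∑ A ∈ Finset.univ.filter (fun A : Finset (Fin n) => A ∪ B = Finset.univ),
      (-1 : ℝ) ^ (A ∩ B).card * (1 - (-1 : ℝ) ^ A.card)
      = (if B = ∅ then 1 else 0) - (-1 : ℝ) ^ (n - B.card) * 2 ^ B.card := by
  have h1 : ∑ A ∈ Finset.univ.filter (fun A : Finset (Fin n) => A ∪ B = Finset.univ),
      (-1 : ℝ) ^ (A ∩ B).card * (1 - (-1 : ℝ) ^ A.card)
      = ∑ C ∈ B.powerset, ((-1 : ℝ) ^ C.card - (-1 : ℝ) ^ (n - B.card)) := by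
    refine Finset.sum_nbij' (fun A => A ∩ B) (fun C => C ∪ Bᶜ) ?_ ?_ ?_ ?_ ?_
    · intro A _
      simp
    · intro C _
      simp [Finset.union_assoc]
      ext a
      simp only [Finset.mem_union, Finset.mem_compl, Finset.mem_univ, iff_true]
      tauto
    · intro A hA
      simp only [Finset.mem_filter, Finset.mem_univ, true_and] at hA
      ext a
      have := Finset.ext_iff.1 hA a
      simp only [Finset.mem_union, Finset.mem_inter, Finset.mem_compl, Finset.mem_univ,
        iff_true] at this ⊢
      tauto
    · intro C hC
      have hC := Finset.mem_powerset.1 hC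
      ext a
      have := @hC a
      simp only [Finset.mem_union, Finset.mem_inter, Finset.mem_compl]
      tauto
    · intro A hA
      simp only [Finset.mem_filter, Finset.mem_univ, true_and] at hA
      have hc : A.card = (A ∩ B).card + (n - B.card) := by
        have e1 := Finset.card_union_add_card_inter A B
        rw [hA, Finset.card_univ, Fintype.card_fin] at e1
        have e2 : B.card ≤ n := by simpa using Finset.card_le_univ B
        omega
      have hs : (-1 : ℝ) ^ (A ∩ B).card * (-1 : ℝ) ^ (A ∩ B).card = 1 := by
        rw [← mul_pow]; simp
      rw [hc, pow_add]
      linear_combination (-(-1 : ℝ) ^ (n - B.card)) * hs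
  rw [h1, Finset.sum_sub_distrib]
  have h2 := Finset.sum_powerset_neg_one_pow_card (x := B)
  have h3 : ∑ C ∈ B.powerset, (-1 : ℝ) ^ C.card = if B = ∅ then 1 else 0 := by
    exact_mod_cast congrArg (Int.cast : ℤ → ℝ) h2
  rw [h3]
  simp [Finset.card_powerset]
  ring

/-- inequality (22) in the proof of Theorem 2.  If an equimarginal
family `(P_A)_{A ⊊ N}` satisfies the odd-subset inequalities
`0 ≤ Σ_{B ⊊ N, A∪B = N} (-1)^{|A∩B|} P_B(x) ≤ 1` for every `A ⊆ N` of odd cardinality,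
then `Q = Σ_{B ⊊ N} (-1)^{n-|B|-1} 2^{|B|-n} P_B` satisfies
`-2⁻ⁿ ≤ Q(x) ≤ 1 - 2⁻ⁿ` for all `x`. -/
theorem stmt_8 (n : ℕ) (P : Finset (Fin n) → (Fin n → Bool) → ℝ)
    (hdist : ∀ A : Finset (Fin n), A ⊂ Finset.univ → IsDistOn A (P A))
    (hequi : Equimarginal P)
    (hineq : ∀ A : Finset (Fin n), Odd A.card → ∀ x : Fin n → Bool,
      0 ≤ (∑ B ∈ Finset.univ.filter
            (fun B : Finset (Fin n) => B ⊂ Finset.univ ∧ A ∪ B = Finset.univ),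
          (-1 : ℝ) ^ (A ∩ B).card * P B x) ∧
      (∑ B ∈ Finset.univ.filter
            (fun B : Finset (Fin n) => B ⊂ Finset.univ ∧ A ∪ B = Finset.univ),
          (-1 : ℝ) ^ (A ∩ B).card * P B x) ≤ 1)
    (x : Fin n → Bool) :
    -(1 / 2 ^ n) ≤ (∑ B ∈ Finset.univ.filter (fun B : Finset (Fin n) => B ⊂ Finset.univ),
        (-1 : ℝ) ^ (n - B.card - 1) * (2 ^ B.card / 2 ^ n) * P B x) ∧
      (∑ B ∈ Finset.univ.filter (fun B : Finset (Fin n) => B ⊂ Finset.univ),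
        (-1 : ℝ) ^ (n - B.card - 1) * (2 ^ B.card / 2 ^ n) * P B x) ≤ 1 - 1 / 2 ^ n := by
  rcases Nat.eq_zero_or_pos n with rfl | hn
  · have : Finset.univ.filter (fun B : Finset (Fin 0) => B ⊂ Finset.univ) = ∅ := by
      ext B
      simp [Finset.ssubset_univ_iff, Subsingleton.elim B Finset.univ]
    rw [this]
    simp
  have he : (∅ : Finset (Fin n)) ⊂ Finset.univ := by
    rw [Finset.ssubset_univ_iff]
    intro h
    have := congrArg Finset.card h
    simp at this
    omega
  have hP : P ∅ x = 1 := by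
    have := congrFun (hdist ∅ he).2.2 x
    have hf : flipOn ∅ x = x := by funext i; simp [flipOn]
    simpa [Mop, hf] using this
  set Q := (∑ B ∈ Finset.univ.filter (fun B : Finset (Fin n) => B ⊂ Finset.univ),
        (-1 : ℝ) ^ (n - B.card - 1) * (2 ^ B.card / 2 ^ n) * P B x) with hQ
  let S : Finset (Fin n) → ℝ := fun A => ∑ B ∈ Finset.univ.filter
            (fun B : Finset (Fin n) => B ⊂ Finset.univ ∧ A ∪ B = Finset.univ),
          (-1 : ℝ) ^ (A ∩ B).card * P B x
  have hb : ∀ A : Finset (Fin n), 0 ≤ (1 - (-1 : ℝ) ^ A.card) * S A ∧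
      (1 - (-1 : ℝ) ^ A.card) * S A ≤ (1 - (-1 : ℝ) ^ A.card) := by
    intro A
    rcases Nat.even_or_odd A.card with h | h
    · simp [h.neg_one_pow]
    · have := hineq A h x
      rw [h.neg_one_pow]
      change 0 ≤ S A ∧ S A ≤ 1 at this
      constructor <;> linarith [this.1, this.2]
  have hlo : 0 ≤ ∑ A, (1 - (-1 : ℝ) ^ A.card) * S A := Finset.sum_nonneg fun A _ => (hb A).1
  have hhi : ∑ A, (1 - (-1 : ℝ) ^ A.card) * S A ≤ ∑ A : Finset (Fin n), (1 - (-1 : ℝ) ^ A.card) :=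
    Finset.sum_le_sum fun A _ => (hb A).2
  have hcount : ∑ A : Finset (Fin n), (1 - (-1 : ℝ) ^ A.card) = 2 ^ n := by
    have h2 := Finset.sum_powerset_neg_one_pow_card (x := (Finset.univ : Finset (Fin n)))
    rw [if_neg he.ne'] at h2
    have h3 : ∑ C : Finset (Fin n), (-1 : ℝ) ^ C.card = 0 := by
      rw [Finset.powerset_univ] at h2
      exact_mod_cast congrArg (Int.cast : ℤ → ℝ) h2
    rw [Finset.sum_sub_distrib, h3]
    simp
  have hsum : ∑ A, (1 - (-1 : ℝ) ^ A.card) * S A = 1 + 2 ^ n * Q := by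
    have e1 : ∑ A, (1 - (-1 : ℝ) ^ A.card) * S A
        = ∑ B ∈ Finset.univ.filter (fun B : Finset (Fin n) => B ⊂ Finset.univ),
          ((if B = ∅ then 1 else 0) - (-1 : ℝ) ^ (n - B.card) * 2 ^ B.card) * P B x := by
      simp_rw [← coef_aux, S, Finset.mul_sum, Finset.sum_mul, Finset.sum_filter]
      rw [Finset.sum_comm]
      refine Finset.sum_congr rfl fun B _ => ?_
      by_cases h : B ⊂ Finset.univ
      · rw [if_pos h]
        refine Finset.sum_congr rfl fun A _ => ?_
        by_cases h' : A ∪ B = Finset.univ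
        · rw [if_pos ⟨h, h'⟩, if_pos h']; ring
        · rw [if_neg (fun t => h' t.2), if_neg h']
      · rw [if_neg h]
        exact Finset.sum_eq_zero fun A _ => if_neg (fun t => h t.1)
    rw [e1, hQ, Finset.mul_sum]
    simp_rw [sub_mul]
    rw [Finset.sum_sub_distrib]
    have e2 : ∑ B ∈ Finset.univ.filter (fun B : Finset (Fin n) => B ⊂ Finset.univ),
        (if B = ∅ then (1 : ℝ) else 0) * P B x = 1 := by
      rw [Finset.sum_eq_single ∅]
      · simp [hP]
      · intro B _ h; simp [h]
      · intro h; exact absurd (by simpa using he) h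
    rw [e2, sub_eq_add_neg, ← Finset.sum_neg_distrib]
    congr 1
    refine Finset.sum_congr rfl fun B hB => ?_
    have hB' : B.card < n := by
      simpa using Finset.card_lt_card (Finset.mem_filter.1 hB).2
    obtain ⟨k, hk⟩ : ∃ k, n - B.card = k + 1 := ⟨n - B.card - 1, by omega⟩
    rw [hk, Nat.add_sub_cancel, pow_succ]
    field_simp
  rw [hcount] at hhi
  rw [hsum] at hlo hhi
  have hpos : (0 : ℝ) < 2 ^ n := by positivity
  have hinv : (2 : ℝ) ^ n * (1 / 2 ^ n) = 1 := by field_simp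
  constructor
  · refine le_of_mul_le_mul_left ?_ hpos
    linarith
  · refine le_of_mul_le_mul_left ?_ hpos
    linarith
end

section
/- Quantum Bell–Wigner inequalities: let ρ be a three-qubit density matrix, i.e. a positive semidefinite 8×8 complex matrix of trace 1, indexed by {0,1}^3. Let ρ_{12}, ρ_{13}, ρ_{23} and ρ_1, ρ_2, ρ_3 denote its two-qubit and one-qubit reduced states, each viewed as an operator on ℂ^8 by tensoring with the identity on the traced-out factors, and define Δ = 1 − ρ_1 − ρ_2 − ρ_3 + ρ_{12} + ρ_{13} + ρ_{23} (an 8×8 hermitian matrix, where 1 is the identity). Then for every Ψ ∈ ℂ^8 with ‖Ψ‖ = 1, 0 ≤ ⟨Ψ, ΔΨ⟩ ≤ 1. -/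
open scoped Matrix ComplexOrder

/-- The reduced state `ρ_A` of an `n`-qubit state `ρ`, viewed as an operator on
`(ℂ²)^{⊗n}`: `ρ_A[x,y] = (Π_{j∉A} δ_{x_j,y_j}) · Σ_w ρ[u(x,w), u(y,w)]`, where `w`
ranges over assignments of values to the coordinates outside `A` and `u(x,w)` agrees
with `x` on `A` and with `w` outside `A`. -/
noncomputable def qreduce {n : ℕ} (A : Finset (Fin n))
    (ρ : Matrix (Fin n → Bool) (Fin n → Bool) ℂ) :
    Matrix (Fin n → Bool) (Fin n → Bool) ℂ :=
  Matrix.of fun x y =>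
    (if ∀ j, j ∉ A → x j = y j then (1 : ℂ) else 0) *
      ∑ w ∈ Finset.univ.filter (fun w : Fin n → Bool => ∀ i, i ∈ A → w i = x i),
        ρ w (fun i => if i ∈ A then y i else w i)

/-- Sign `(-1)^{|x|}` of a bit triple. -/
noncomputable def bsgn (x : Fin 3 → Bool) : ℂ :=
  (if x 0 then -1 else 1) * (if x 1 then -1 else 1) * (if x 2 then -1 else 1)

/-- Bitwise negation. -/
def bnot (x : Fin 3 → Bool) : Fin 3 → Bool := fun i => !(x i)

/-- Bitwise negation as an equivalence. -/
def bnotE : (Fin 3 → Bool) ≃ (Fin 3 → Bool) where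
  toFun := bnot
  invFun := bnot
  left_inv x := by funext i; simp [bnot]
  right_inv x := by funext i; simp [bnot]

theorem bnot_bnot (x) : bnot (bnot x) = x := by funext i; simp [bnot]

theorem bsgn_bnot (x) : bsgn (bnot x) = - bsgn x := by
  unfold bsgn bnot
  cases x 0 <;> cases x 1 <;> cases x 2 <;> simp

theorem star_bsgn (x) : star (bsgn x) = bsgn x := by
  unfold bsgn
  cases x 0 <;> cases x 1 <;> cases x 2 <;> simp

theorem bsgn_sq (x) : bsgn x * bsgn x = 1 := by
  unfold bsgn
  cases x 0 <;> cases x 1 <;> cases x 2 <;> simp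

/-- Triples of bits as functions. -/
def tripE : (Bool × Bool × Bool) ≃ (Fin 3 → Bool) where
  toFun p := ![p.1, p.2.1, p.2.2]
  invFun x := (x 0, x 1, x 2)
  left_inv p := by simp
  right_inv x := by funext i; fin_cases i <;> rfl

theorem sum_trip (f : (Fin 3 → Bool) → ℂ) :
    ∑ x, f x = ∑ a : Bool, ∑ b : Bool, ∑ c : Bool, f ![a, b, c] := by
  rw [← tripE.sum_comp f, Fintype.sum_prod_type]
  simp_rw [Fintype.sum_prod_type]
  rfl

theorem upd3 (A : Finset (Fin 3)) (a b c p q r : Bool) :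
    (fun i => if i ∈ A then (![p, q, r] : Fin 3 → Bool) i else (![a, b, c] : Fin 3 → Bool) i) =
     ![if 0 ∈ A then p else a, if 1 ∈ A then q else b, if 2 ∈ A then r else c] := by
  funext i; fin_cases i <;> rfl

theorem qreduce_trip (A : Finset (Fin 3)) (ρ : Matrix (Fin 3 → Bool) (Fin 3 → Bool) ℂ)
    (a b c p q r : Bool) :
    qreduce A ρ ![a, b, c] ![p, q, r] =
      (if (0 ∉ A → a = p) ∧ (1 ∉ A → b = q) ∧ (2 ∉ A → c = r) then 1 else 0) *
      ∑ u : Bool, ∑ v : Bool, ∑ w : Bool,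
        if (0 ∈ A → u = a) ∧ (1 ∈ A → v = b) ∧ (2 ∈ A → w = c) then
          ρ ![u, v, w] ![if 0 ∈ A then p else u, if 1 ∈ A then q else v,
            if 2 ∈ A then r else w] else 0 := by
  unfold qreduce
  simp only [Matrix.of_apply, Finset.sum_filter]
  rw [sum_trip]
  simp only [upd3, Fin.forall_fin_succ, Fin.forall_fin_zero]
  simp

theorem delta_entry (ρ : Matrix (Fin 3 → Bool) (Fin 3 → Bool) ℂ) (htr : ρ.trace = 1)
    (x y : Fin 3 → Bool) :
    (1 - qreduce {0} ρ - qreduce {1} ρ - qreduce {2} ρ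
        + qreduce {0, 1} ρ + qreduce {0, 2} ρ + qreduce {1, 2} ρ) x y
      = ρ x y + bsgn x * bsgn y * ρ (bnot y) (bnot x) := by
  obtain ⟨⟨a, b, c⟩, rfl⟩ := tripE.surjective x
  obtain ⟨⟨p, q, r⟩, rfl⟩ := tripE.surjective y
  have hn : ∀ a b c : Bool, bnot ![a, b, c] = ![!a, !b, !c] := by
    intro a b c; funext i; fin_cases i <;> rfl
  have h1 : (1 : Matrix (Fin 3 → Bool) (Fin 3 → Bool) ℂ) ![a, b, c] ![p, q, r] =
      if a = p ∧ b = q ∧ c = r then ρ.trace else 0 := by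
    rw [Matrix.one_apply, htr]
    congr 1
    simp
  have ht : ρ.trace = ∑ a : Bool, ∑ b : Bool, ∑ c : Bool, ρ ![a, b, c] ![a, b, c] := by
    rw [Matrix.trace, sum_trip]; rfl
  rw [ht] at h1
  simp only [tripE, Equiv.coe_fn_mk, Matrix.add_apply, Matrix.sub_apply, hn, h1, qreduce_trip]
  clear h1 ht htr hn
  simp only [bsgn, Fintype.sum_bool]
  cases a <;> cases b <;> cases c <;> cases p <;> cases q <;> cases r <;> simp <;> ring

/-- The antiunitary spin flip. -/
noncomputable def flip3 (Ψ : (Fin 3 → Bool) → ℂ) : (Fin 3 → Bool) → ℂ :=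
  fun x => bsgn x * star (Ψ (bnot x))

theorem flip3_norm (Ψ : (Fin 3 → Bool) → ℂ) : star (flip3 Ψ) ⬝ᵥ flip3 Ψ = star Ψ ⬝ᵥ Ψ := by
  simp only [dotProduct, Pi.star_apply, flip3]
  refine Fintype.sum_equiv bnotE _ _ fun x => ?_
  change _ = star (Ψ (bnot x)) * Ψ (bnot x)
  rw [star_mul', star_bsgn, star_star]
  linear_combination (star (Ψ (bnot x)) * Ψ (bnot x)) * bsgn_sq x

theorem flip3_orth (Ψ : (Fin 3 → Bool) → ℂ) : star Ψ ⬝ᵥ flip3 Ψ = 0 := by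
  have h : star Ψ ⬝ᵥ flip3 Ψ = - (star Ψ ⬝ᵥ flip3 Ψ) := by
    simp only [dotProduct, Pi.star_apply, flip3]
    rw [← Finset.sum_neg_distrib]
    refine Fintype.sum_equiv bnotE _ _ fun x => ?_
    change _ = -(star (Ψ (bnot x)) * (bsgn (bnot x) * star (Ψ (bnot (bnot x)))))
    rw [bsgn_bnot, bnot_bnot]
    ring
  exact self_eq_neg.mp h

theorem flip3_form (ρ : Matrix (Fin 3 → Bool) (Fin 3 → Bool) ℂ) (Ψ : (Fin 3 → Bool) → ℂ) :
    star (flip3 Ψ) ⬝ᵥ ρ.mulVec (flip3 Ψ) =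
      ∑ x, ∑ y, star (Ψ x) * (bsgn x * bsgn y * ρ (bnot y) (bnot x)) * Ψ y := by
  simp only [dotProduct, Matrix.mulVec, Pi.star_apply, flip3, Finset.mul_sum]
  rw [Finset.sum_comm]
  refine Fintype.sum_equiv bnotE _ _ fun x => ?_
  refine Fintype.sum_equiv bnotE _ _ fun y => ?_
  change _ = star (Ψ (bnot x)) * (bsgn (bnot x) * bsgn (bnot y) *
    ρ (bnot (bnot y)) (bnot (bnot x))) * Ψ (bnot y)
  rw [bsgn_bnot, bsgn_bnot, bnot_bnot, bnot_bnot, star_mul', star_bsgn, star_star]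
  ring

theorem two_le_trace {ι : Type*} [Fintype ι] [DecidableEq ι] (ρ : Matrix ι ι ℂ)
    (hpsd : ρ.PosSemidef) (u v : ι → ℂ) (hu : star u ⬝ᵥ u = 1) (hv : star v ⬝ᵥ v = 1)
    (huv : star u ⬝ᵥ v = 0) :
    star u ⬝ᵥ ρ.mulVec u + star v ⬝ᵥ ρ.mulVec v ≤ ρ.trace := by
  have hvu : star v ⬝ᵥ u = 0 := by
    have := congrArg star huv
    rwa [Matrix.star_dotProduct, star_star, star_zero, dotProduct_comm, dotProduct_comm] at this
  set P : Matrix ι ι ℂ := 1 - Matrix.vecMulVec u (star u) - Matrix.vecMulVec v (star v) with hP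
  have hPH : Pᴴ = P := by
    simp [hP, Matrix.conjTranspose_sub, Matrix.conjTranspose_vecMulVec]
  have hPP : P * P = P := by
    simp [hP, mul_sub, sub_mul, Matrix.vecMulVec_mul_vecMulVec, hu, hv, huv, hvu]
  have h0 : 0 ≤ (Pᴴ * ρ * P).trace := (hpsd.conjTranspose_mul_mul_same P).trace_nonneg
  have ht : ∀ w : ι → ℂ, (ρ * Matrix.vecMulVec w (star w)).trace = star w ⬝ᵥ ρ.mulVec w := by
    intro w
    rw [Matrix.mul_vecMulVec, Matrix.trace_vecMulVec, dotProduct_comm]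
  rw [hPH, Matrix.trace_mul_comm, ← mul_assoc, hPP, Matrix.trace_mul_comm, hP, mul_sub, mul_sub,
    Matrix.trace_sub, Matrix.trace_sub, ht, ht, mul_one, sub_sub] at h0
  exact sub_nonneg.mp h0

/-- Theorem 5 of the paper: quantum Bell–Wigner inequalities.
If `ρ` is a three-qubit density matrix with one- and two-qubit reduced states
`ρ_1, ρ_2, ρ_3, ρ_{12}, ρ_{13}, ρ_{23}` (viewed as operators on `ℂ⁸`), and
`Δ = 1 - ρ_1 - ρ_2 - ρ_3 + ρ_{12} + ρ_{13} + ρ_{23}`, then for every normalised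
`Ψ ∈ ℂ⁸` one has `0 ≤ ⟨Ψ, ΔΨ⟩ ≤ 1`. -/
theorem stmt_10 (ρ : Matrix (Fin 3 → Bool) (Fin 3 → Bool) ℂ)
    (hpsd : ρ.PosSemidef) (htr : ρ.trace = 1)
    (Δ : Matrix (Fin 3 → Bool) (Fin 3 → Bool) ℂ)
    (hΔ : Δ = 1 - qreduce {0} ρ - qreduce {1} ρ - qreduce {2} ρ
        + qreduce {0, 1} ρ + qreduce {0, 2} ρ + qreduce {1, 2} ρ)
    (Ψ : (Fin 3 → Bool) → ℂ) (hΨ : star Ψ ⬝ᵥ Ψ = 1) :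
    0 ≤ star Ψ ⬝ᵥ Δ.mulVec Ψ ∧ star Ψ ⬝ᵥ Δ.mulVec Ψ ≤ 1 := by
  
  have key : star Ψ ⬝ᵥ Δ.mulVec Ψ =
      star Ψ ⬝ᵥ ρ.mulVec Ψ + star (flip3 Ψ) ⬝ᵥ ρ.mulVec (flip3 Ψ) := by
    rw [flip3_form]
    simp only [dotProduct, Matrix.mulVec, Pi.star_apply, Finset.mul_sum]
    rw [← Finset.sum_add_distrib]
    refine Finset.sum_congr rfl fun x _ => ?_
    rw [← Finset.sum_add_distrib]
    refine Finset.sum_congr rfl fun y _ => ?_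
    rw [hΔ, delta_entry ρ htr]
    ring
  rw [key]
  refine ⟨add_nonneg (hpsd.dotProduct_mulVec_nonneg Ψ) (hpsd.dotProduct_mulVec_nonneg _), ?_⟩
  rw [← htr]
  exact two_le_trace ρ hpsd Ψ (flip3 Ψ) hΨ ((flip3_norm Ψ).trans hΨ) (flip3_orth Ψ)
end

section
/- The four-qubit analogue of the quantum Bell–Wigner inequality fails: let Ψ = (e_{0000} + e_{1100})/√2 ∈ ℂ^{16} and ρ = |Ψ⟩⟨Ψ| (the rank-one projection onto Ψ), and define Δ_1 = ρ_1 − ρ_{12} − ρ_{13} − ρ_{14} + ρ_{123} + ρ_{124} + ρ_{134}, where each reduced state is viewed as an operator on ℂ^{16}. Then for v = (e_{0011} + e_{1111})/√2, one has Δ_1 v = −(1/2) v; in particular ⟨v, Δ_1 v⟩ = −1/2 < 0, so Δ_1 is not positive semidefinite. -/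
open scoped Matrix ComplexOrder

/-- The four-qubit state `Ψ = (e₀₀₀₀ + e₁₁₀₀)/√2`. -/
noncomputable def psi4 : (Fin 4 → Bool) → ℂ :=
  fun x => ((if x = (fun _ => false) then 1 else 0)
      + (if x = (fun i : Fin 4 => decide (i.val < 2)) then 1 else 0)) / (Real.sqrt 2 : ℂ)

/-- The vector `v = (e₀₀₁₁ + e₁₁₁₁)/√2`. -/
noncomputable def v4 : (Fin 4 → Bool) → ℂ :=
  fun x => ((if x = (fun i : Fin 4 => decide (2 ≤ i.val)) then 1 else 0)
      + (if x = (fun _ => true) then 1 else 0)) / (Real.sqrt 2 : ℂ)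

/-- Integer version of `√2 • psi4`. -/
def psiZ (x : Fin 4 → Bool) : ℤ :=
  (if x = (fun _ => false) then 1 else 0)
      + (if x = (fun i : Fin 4 => decide (i.val < 2)) then 1 else 0)

/-- Integer version of `√2 • v4`. -/
def vZ (x : Fin 4 → Bool) : ℤ :=
  (if x = (fun i : Fin 4 => decide (2 ≤ i.val)) then 1 else 0)
      + (if x = (fun _ => true) then 1 else 0)

/-- Integer version of twice the reduced state of `|Ψ⟩⟨Ψ|`. -/
def redZ (A : Finset (Fin 4)) (x y : Fin 4 → Bool) : ℤ :=
  (if ∀ j, j ∉ A → x j = y j then 1 else 0) *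
    ∑ w : Fin 4 → Bool, if ∀ i, i ∈ A → w i = x i then
      psiZ w * psiZ (fun i => if i ∈ A then y i else w i) else 0

/-- Integer version of `2 • Δ₁`. -/
def deltaZ (x y : Fin 4 → Bool) : ℤ :=
  redZ {0} x y - redZ {0, 1} x y - redZ {0, 2} x y - redZ {0, 3} x y
    + redZ {0, 1, 2} x y + redZ {0, 1, 3} x y + redZ {0, 2, 3} x y

lemma deltaZ_v : ∀ x : Fin 4 → Bool,
    deltaZ x (fun i : Fin 4 => decide (2 ≤ i.val)) + deltaZ x (fun _ => true) = - vZ x := by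
  decide +kernel

lemma sqrt_two_mul : ((Real.sqrt 2 : ℝ) : ℂ) * ((Real.sqrt 2 : ℝ) : ℂ) = 2 := by
  rw [← Complex.ofReal_mul, Real.mul_self_sqrt (by norm_num)]
  norm_num

lemma psi4_eq (x : Fin 4 → Bool) : psi4 x = (psiZ x : ℂ) / (Real.sqrt 2 : ℂ) := by
  simp [psi4, psiZ]

lemma v4_eq (x : Fin 4 → Bool) : v4 x = (vZ x : ℂ) / (Real.sqrt 2 : ℂ) := by
  simp [v4, vZ]

lemma psi4_mul (x y : Fin 4 → Bool) :
    psi4 x * (starRingEnd ℂ) (psi4 y) = (1 / 2) * ((psiZ x * psiZ y : ℤ) : ℂ) := by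
  rw [psi4_eq, psi4_eq, map_div₀, Complex.conj_ofReal, div_mul_div_comm, sqrt_two_mul]
  simp
  ring

lemma qreduce_eq (A : Finset (Fin 4)) (x y : Fin 4 → Bool) :
    qreduce A (Matrix.of fun x y => psi4 x * (starRingEnd ℂ) (psi4 y)) x y
      = (1 / 2) * (redZ A x y : ℂ) := by
  simp only [qreduce, redZ, Matrix.of_apply, psi4_mul]
  rw [← Finset.mul_sum, Finset.sum_filter]
  push_cast
  ring

/-- The four-qubit analogue of the quantum Bell–Wigner inequality
fails: for `ρ = |Ψ⟩⟨Ψ|` with `Ψ = (e₀₀₀₀ + e₁₁₀₀)/√2` and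
`Δ₁ = ρ_1 - ρ_{12} - ρ_{13} - ρ_{14} + ρ_{123} + ρ_{124} + ρ_{134}`, the vector
`v = (e₀₀₁₁ + e₁₁₁₁)/√2` satisfies `Δ₁ v = -(1/2) v`; in particular
`⟨v, Δ₁ v⟩ = -1/2 < 0` and `Δ₁` is not positive semidefinite. -/
theorem stmt_13 (ρ : Matrix (Fin 4 → Bool) (Fin 4 → Bool) ℂ)
    (hρ : ρ = Matrix.of fun x y => psi4 x * (starRingEnd ℂ) (psi4 y))
    (Δ₁ : Matrix (Fin 4 → Bool) (Fin 4 → Bool) ℂ)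
    (hΔ₁ : Δ₁ = qreduce {0} ρ - qreduce {0, 1} ρ - qreduce {0, 2} ρ - qreduce {0, 3} ρ
        + qreduce {0, 1, 2} ρ + qreduce {0, 1, 3} ρ + qreduce {0, 2, 3} ρ) :
    Δ₁.mulVec v4 = (-(1 / 2) : ℂ) • v4 ∧
    star v4 ⬝ᵥ Δ₁.mulVec v4 = -(1 / 2) ∧
    ¬ Δ₁.PosSemidef := by
  have hD : ∀ x y, Δ₁ x y = (1 / 2) * (deltaZ x y : ℂ) := by
    intro x y
    subst hρ
    simp only [hΔ₁, Matrix.add_apply, Matrix.sub_apply, qreduce_eq, deltaZ]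
    push_cast
    ring
  have hs : (Real.sqrt 2 : ℂ) ≠ 0 := by
    intro h
    have := sqrt_two_mul
    rw [h] at this
    norm_num at this
  have h1 : Δ₁.mulVec v4 = (-(1 / 2) : ℂ) • v4 := by
    funext x
    have h := congrArg (Int.cast : ℤ → ℂ) (deltaZ_v x)
    push_cast at h
    have e : Δ₁.mulVec v4 x = (Δ₁ x (fun i : Fin 4 => decide (2 ≤ i.val))
        + Δ₁ x (fun _ => true)) / (Real.sqrt 2 : ℂ) := by
      simp only [Matrix.mulVec, dotProduct, v4, ← mul_div_assoc, ← Finset.sum_div, mul_add,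
        mul_ite, mul_one, mul_zero, Finset.sum_add_distrib, Finset.sum_ite_eq',
        Finset.mem_univ, if_true]
    rw [e, hD, hD, ← mul_add, h, Pi.smul_apply, v4_eq, smul_eq_mul]
    ring
  have hZ : ∑ x, vZ x * vZ x = 2 := by decide +kernel
  have hn : star v4 ⬝ᵥ v4 = 1 := by
    have e : ∀ x, star v4 x * v4 x = ((vZ x * vZ x : ℤ) : ℂ) / 2 := by
      intro x
      rw [Pi.star_apply, v4_eq, ← sqrt_two_mul, star_div₀, RCLike.star_def,
        Complex.conj_ofReal, div_mul_div_comm]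
      simp
    simp only [dotProduct, e]
    rw [← Finset.sum_div, ← Int.cast_sum, hZ]
    norm_num
  have h2 : star v4 ⬝ᵥ Δ₁.mulVec v4 = -(1 / 2) := by
    rw [h1, dotProduct_smul, hn]
    simp
  refine ⟨h1, h2, fun hp => ?_⟩
  have h := hp.dotProduct_mulVec_nonneg v4
  rw [h2, Complex.le_def] at h
  have := h.1
  norm_num at this
end

section
/- Polygon inequalities: let n ≥ 2 and let ρ_1, …, ρ_n be one-qubit density matrices (2×2 positive semidefinite complex matrices of trace 1), and let λ_i denote the smaller eigenvalue of ρ_i. Then there exists a unit vector Ψ ∈ (ℂ^2)^{⊗n} (an n-qubit pure state) whose one-qubit reduced states are ρ_1, …, ρ_n if and only if λ_i ≤ Σ_{j≠i} λ_j for every i. -/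
open scoped Matrix ComplexOrder

/-- The one-qubit reduced state at site `i` of an `n`-qubit vector `Ψ`:
`ρ_i[a,b] = Σ Ψ_x conj(Ψ_y)`, the sum over pairs `x, y ∈ {0,1}ⁿ` with `x_i = a`,
`y_i = b` and `x_j = y_j` for `j ≠ i`. -/
noncomputable def qubitReduced {n : ℕ} (i : Fin n) (Ψ : (Fin n → Bool) → ℂ) :
    Matrix Bool Bool ℂ :=
  Matrix.of fun a b =>
    ∑ x ∈ Finset.univ.filter (fun x : Fin n → Bool => x i = a),
      Ψ x * (starRingEnd ℂ) (Ψ (Function.update x i b))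

/-- Diagonal entries with smaller eigenvalue `l`. -/
noncomputable def dg (l : ℝ) : Bool → ℂ := fun b => if b then (l : ℂ) else ((1 - l : ℝ) : ℂ)

lemma exists_diag (A : Matrix Bool Bool ℂ) (h : A.PosSemidef) (ht : A.trace = 1) (l : ℝ)
    (hl : l = min (h.1.eigenvalues false) (h.1.eigenvalues true)) :
    ∃ V : Matrix Bool Bool ℂ, V * Vᴴ = 1 ∧ Vᴴ * V = 1 ∧
      A = V * Matrix.diagonal (dg l) * Vᴴ ∧ 0 ≤ l ∧ l ≤ 1 / 2 := by
  have h0 := h.eigenvalues_nonneg false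
  have h1 := h.eigenvalues_nonneg true
  have hs : h.1.eigenvalues true + h.1.eigenvalues false = 1 := by
    have := h.1.trace_eq_sum_eigenvalues
    rw [ht] at this
    simp at this
    exact_mod_cast this.symm
  have hsp := h.1.spectral_theorem
  rw [Unitary.conjStarAlgAut_apply] at hsp
  set U := h.1.eigenvectorUnitary
  have hU1 : (U : Matrix Bool Bool ℂ) * (U : Matrix Bool Bool ℂ)ᴴ = 1 := by
    have := Unitary.mul_star_self_of_mem U.2
    rwa [Matrix.star_eq_conjTranspose] at this
  have hU2 : (U : Matrix Bool Bool ℂ)ᴴ * (U : Matrix Bool Bool ℂ) = 1 := by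
    have := Unitary.star_mul_self_of_mem U.2
    rwa [Matrix.star_eq_conjTranspose] at this
  rw [Matrix.star_eq_conjTranspose] at hsp
  have hl0 : 0 ≤ l := by rw [hl]; exact le_min h0 h1
  rcases le_total (h.1.eigenvalues false) (h.1.eigenvalues true) with hc | hc
  · rw [min_eq_left hc] at hl
    let P : Matrix Bool Bool ℂ := Matrix.of fun a b => if a = b then 0 else 1
    have hP : Pᴴ = P := by
      ext a b; cases a <;> cases b <;> simp [P]
    have hPP : P * P = 1 := by
      ext a b; cases a <;> cases b <;> simp [P, Matrix.mul_apply]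
    have hD : P * Matrix.diagonal (dg l) * P
        = Matrix.diagonal ((RCLike.ofReal : ℝ → ℂ) ∘ h.1.eigenvalues) := by
      have : h.1.eigenvalues true = 1 - l := by linarith
      ext a b; cases a <;> cases b <;> simp [P, Matrix.mul_apply, dg, Matrix.diagonal, this, hl]
    refine ⟨U * P, ?_, ?_, ?_, hl0, by linarith⟩
    · rw [Matrix.conjTranspose_mul, hP]
      calc _ = (U : Matrix Bool Bool ℂ) * (P * P) * (U : Matrix Bool Bool ℂ)ᴴ := by
            simp only [Matrix.mul_assoc]
        _ = 1 := by rw [hPP, Matrix.mul_one, hU1]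
    · rw [Matrix.conjTranspose_mul, hP]
      calc _ = P * ((U : Matrix Bool Bool ℂ)ᴴ * (U : Matrix Bool Bool ℂ)) * P := by
            simp only [Matrix.mul_assoc]
        _ = 1 := by rw [hU2, Matrix.mul_one, hPP]
    · rw [Matrix.conjTranspose_mul, hP, hsp, ← hD]
      simp only [Matrix.mul_assoc]
  · rw [min_eq_right hc] at hl
    have hD : Matrix.diagonal (dg l)
        = Matrix.diagonal ((RCLike.ofReal : ℝ → ℂ) ∘ h.1.eigenvalues) := by
      have : h.1.eigenvalues false = 1 - l := by linarith
      ext a b; cases a <;> cases b <;> simp [dg, Matrix.diagonal, this, hl]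
    exact ⟨U, hU1, hU2, by rw [hD]; exact hsp, hl0, by linarith⟩

/-- Local transformation. -/
noncomputable def loc {n : ℕ} (V : Fin n → Matrix Bool Bool ℂ) (c : (Fin n → Bool) → ℂ) :
    (Fin n → Bool) → ℂ := fun x => ∑ y, (∏ j, V j (x j) (y j)) * c y

lemma upd_sum {n : ℕ} (i : Fin n) (y : Fin n → Bool) (F : (Fin n → Bool) → ℂ) :
    ∑ z : Fin n → Bool, (∏ j ∈ Finset.univ.erase i, if y j = z j then (1:ℂ) else 0) * F z
      = ∑ q : Bool, F (Function.update y i q) := by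
  have : ∀ z : Fin n → Bool, (∏ j ∈ Finset.univ.erase i, if y j = z j then (1:ℂ) else 0)
      = if z = Function.update y i (z i) then 1 else 0 := by
    intro z
    rw [Finset.prod_ite_zero]
    simp only [Finset.prod_const_one]
    congr 1
    apply propext
    constructor
    · intro h
      ext j
      by_cases hj : j = i
      · subst hj; simp
      · simp [hj, h j (by simp [hj])]
    · intro h j hj
      rw [h]; simp at hj; simp [hj]
  simp_rw [this, ite_mul, one_mul, zero_mul]
  rw [← Finset.sum_filter]
  symm
  refine Finset.sum_bij (fun q _ => Function.update y i q) ?_ ?_ ?_ ?_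
  · intro q _; simp
  · intro a _ b _ h
    have := congrFun h i
    simpa using this
  · intro z hz
    exact ⟨z i, Finset.mem_univ _, by simpa using (Finset.mem_filter.1 hz).2.symm⟩
  · intros; rfl

lemma red_loc {n : ℕ} (V : Fin n → Matrix Bool Bool ℂ) (hV : ∀ i, (V i)ᴴ * V i = 1)
    (c : (Fin n → Bool) → ℂ) (i : Fin n) :
    qubitReduced i (loc V c) = V i * qubitReduced i c * (V i)ᴴ := by
  ext a b
  have key : ∀ y z : Fin n → Bool,
      ∑ x : Fin n → Bool, (if x i = a then
        (∏ j, V j (x j) (y j)) * (starRingEnd ℂ) (∏ j, V j (Function.update x i b j) (z j)) else 0)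
      = V i a (y i) * (starRingEnd ℂ) (V i b (z i)) *
        ∏ j ∈ Finset.univ.erase i, if y j = z j then (1:ℂ) else 0 := by
    intro y z
    let f : Fin n → Bool → ℂ := fun j s =>
      if j = i then (if s = a then V i a (y i) * (starRingEnd ℂ) (V i b (z i)) else 0)
      else V j s (y j) * (starRingEnd ℂ) (V j s (z j))
    have h1 : ∀ x : Fin n → Bool, (if x i = a then
        (∏ j, V j (x j) (y j)) * (starRingEnd ℂ) (∏ j, V j (Function.update x i b j) (z j)) else 0)
        = ∏ j, f j (x j) := by
      intro x
      rw [← Finset.mul_prod_erase _ (fun j => f j (x j)) (Finset.mem_univ i)]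
      by_cases hx : x i = a
      · rw [if_pos hx, map_prod, ← Finset.prod_mul_distrib,
          ← Finset.mul_prod_erase _ _ (Finset.mem_univ i)]
        congr 1
        · simp [f, hx]
        · refine Finset.prod_congr rfl fun j hj => ?_
          have : j ≠ i := by simpa using hj
          simp [f, this]
      · simp [f, hx]
    simp_rw [h1]
    rw [← Fintype.prod_sum (f := f), ← Finset.mul_prod_erase _ _ (Finset.mem_univ i)]
    congr 1
    · simp [f]
    · refine Finset.prod_congr rfl fun j hj => ?_
      have hj' : j ≠ i := by simpa using hj
      have := congrFun (congrFun (hV j) (z j)) (y j)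
      rw [Matrix.mul_apply, Matrix.one_apply] at this
      simp only [Matrix.conjTranspose_apply] at this
      simp only [f, hj', if_false]
      rw [show (if y j = z j then (1:ℂ) else 0) = if z j = y j then 1 else 0 by simp [eq_comm],
        ← this]
      exact Finset.sum_congr rfl fun s _ => mul_comm _ _
  have lhs : qubitReduced i (loc V c) a b = ∑ y : Fin n → Bool, ∑ q : Bool,
      V i a (y i) * (starRingEnd ℂ) (V i b q) *
        (c y * (starRingEnd ℂ) (c (Function.update y i q))) := by
    calc qubitReduced i (loc V c) a b
        = ∑ x : Fin n → Bool, ∑ y : Fin n → Bool, ∑ z : Fin n → Bool, (if x i = a then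
        (∏ j, V j (x j) (y j)) * (starRingEnd ℂ) (∏ j, V j (Function.update x i b j) (z j)) else 0)
          * (c y * (starRingEnd ℂ) (c z)) := by
          simp only [qubitReduced, Matrix.of_apply, loc]
          rw [Finset.sum_filter]
          refine Finset.sum_congr rfl fun x _ => ?_
          split_ifs
          · rw [map_sum, Finset.sum_mul_sum]
            refine Finset.sum_congr rfl fun y _ => Finset.sum_congr rfl fun z _ => ?_
            rw [map_mul]; ring
          · simp
      _ = ∑ y : Fin n → Bool, ∑ z : Fin n → Bool, ∑ x : Fin n → Bool, (if x i = a then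
        (∏ j, V j (x j) (y j)) * (starRingEnd ℂ) (∏ j, V j (Function.update x i b j) (z j)) else 0)
          * (c y * (starRingEnd ℂ) (c z)) := by
          rw [Finset.sum_comm]
          exact Finset.sum_congr rfl fun y _ => Finset.sum_comm
      _ = _ := by
          refine Finset.sum_congr rfl fun y _ => ?_
          simp_rw [← Finset.sum_mul, key]
          have := upd_sum i y (fun z => V i a (y i) * (starRingEnd ℂ) (V i b (z i)) *
            (c y * (starRingEnd ℂ) (c z)))
          simp only [Function.update_self] at this
          rw [← this]
          exact Finset.sum_congr rfl fun z _ => by ring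
  rw [lhs, Finset.sum_comm, Matrix.mul_apply]
  refine Finset.sum_congr rfl fun q _ => ?_
  rw [Matrix.mul_apply, Finset.sum_mul]
  simp only [qubitReduced, Matrix.of_apply, Matrix.conjTranspose_apply]
  rw [← Finset.sum_fiberwise (g := fun y : Fin n → Bool => y i)]
  refine Finset.sum_congr rfl fun p _ => ?_
  rw [Finset.mul_sum, Finset.sum_mul]
  refine Finset.sum_congr rfl fun y hy => ?_
  have : y i = p := by simpa using hy
  rw [this, starRingEnd_apply]; ring

lemma red_trace {n : ℕ} (i : Fin n) (c : (Fin n → Bool) → ℂ) :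
    star c ⬝ᵥ c = (qubitReduced i c).trace := by
  simp only [Matrix.trace, Matrix.diag, qubitReduced, Matrix.of_apply, dotProduct]
  rw [← Finset.sum_fiberwise (g := fun y : Fin n → Bool => y i)]
  refine Finset.sum_congr rfl fun p _ => Finset.sum_congr rfl fun y hy => ?_
  have : y i = p := by simpa using hy
  rw [← this, Function.update_eq_self, mul_comm]; rfl

lemma necessity {n : ℕ} (c : (Fin n → Bool) → ℂ) (l : Fin n → ℝ) (hl2 : ∀ i, l i ≤ 1 / 2)
    (h : ∀ i, qubitReduced i c = Matrix.diagonal (dg (l i))) (i : Fin n) :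
    l i ≤ ∑ j ∈ Finset.univ.erase i, l j := by
  have hl : ∀ j, l j = ∑ x : Fin n → Bool, if x j = true then ‖c x‖ ^ 2 else 0 := by
    intro j
    have := congrFun (congrFun (h j) true) true
    simp only [qubitReduced, Matrix.of_apply, Matrix.diagonal_apply_eq, dg, if_true] at this
    have h2 : ((l j : ℝ) : ℂ) = ((∑ x : Fin n → Bool, if x j = true then ‖c x‖ ^ 2 else 0 : ℝ) : ℂ) := by
      rw [← this, ← Finset.sum_filter, Complex.ofReal_sum]
      refine Finset.sum_congr rfl fun x hx => ?_
      have hx : x j = true := by simpa using hx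
      rw [← hx, Function.update_eq_self, Complex.mul_conj, Complex.normSq_eq_norm_sq]
    exact_mod_cast h2
  let Z : Finset (Fin n → Bool) := Finset.univ.filter fun x => x i = false
  let o : Fin n → Bool := fun _ => false
  have hoZ : o ∈ Z := by simp [Z, o]
  let u : (Fin n → Bool) → (Fin n → Bool) := fun x => Function.update x i true
  -- reindexing of the strings with `x i = true`
  have hre : ∀ F : (Fin n → Bool) → ℝ,
      (∑ x : Fin n → Bool, if x i = true then F x else 0) = ∑ x ∈ Z, F (u x) := by
    intro F
    rw [← Finset.sum_filter]
    symm
    refine Finset.sum_bij' (fun x _ => u x) (fun x _ => Function.update x i false) ?_ ?_ ?_ ?_ ?_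
    · intro x _; simp [u]
    · intro x _; simp [Z]
    · intro x hx
      have : x i = false := by simpa [Z] using hx
      simp [u, ← this]
    · intro x hx
      have : x i = true := by simpa using hx
      simp [u, ← this]
    · intros; rfl
  have hli : l i = ∑ x ∈ Z, ‖c (u x)‖ ^ 2 := by rw [hl i, hre]
  have hli' : 1 - l i = ∑ x ∈ Z, ‖c x‖ ^ 2 := by
    have := congrFun (congrFun (h i) false) false
    simp only [qubitReduced, Matrix.of_apply, Matrix.diagonal_apply_eq, dg] at this
    have h2 : ((1 - l i : ℝ) : ℂ) = ((∑ x ∈ Z, ‖c x‖ ^ 2 : ℝ) : ℂ) := by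
      rw [if_neg (by simp)] at this
      rw [← this, Complex.ofReal_sum]
      refine Finset.sum_congr rfl fun x hx => ?_
      have hx : x i = false := by simpa [Z] using hx
      rw [← hx, Function.update_eq_self, Complex.mul_conj, Complex.normSq_eq_norm_sq]
    exact_mod_cast h2
  have hoff : ∑ x ∈ Z, c x * (starRingEnd ℂ) (c (u x)) = 0 := by
    have := congrFun (congrFun (h i) false) true
    simpa [qubitReduced] using this
  rw [← Finset.add_sum_erase _ _ hoZ] at hli hli' hoff
  set p := ‖c o‖ ^ 2 with hp
  set q := ‖c (u o)‖ ^ 2 with hq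
  set A0 := ∑ x ∈ Z.erase o, ‖c x‖ ^ 2 with hA0
  set A1 := ∑ x ∈ Z.erase o, ‖c (u x)‖ ^ 2 with hA1
  have hA0n : 0 ≤ A0 := Finset.sum_nonneg fun _ _ => by positivity
  have hA1n : 0 ≤ A1 := Finset.sum_nonneg fun _ _ => by positivity
  have hpn : 0 ≤ p := by positivity
  have hqn : 0 ≤ q := by positivity
  have hpq : p * q ≤ A0 * A1 := by
    have h1 : ‖c o‖ * ‖c (u o)‖ ≤ ∑ x ∈ Z.erase o, ‖c x‖ * ‖c (u x)‖ := by
      have : c o * (starRingEnd ℂ) (c (u o))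
          = -∑ x ∈ Z.erase o, c x * (starRingEnd ℂ) (c (u x)) := eq_neg_of_add_eq_zero_left hoff
      have h3 : ‖c o‖ * ‖c (u o)‖ = ‖c o * (starRingEnd ℂ) (c (u o))‖ := by simp
      rw [h3, this, norm_neg]
      refine (norm_sum_le _ _).trans (le_of_eq ?_)
      simp
    calc p * q = (‖c o‖ * ‖c (u o)‖) ^ 2 := by rw [hp, hq]; ring
      _ ≤ (∑ x ∈ Z.erase o, ‖c x‖ * ‖c (u x)‖) ^ 2 := by gcongr
      _ ≤ _ := Finset.sum_mul_sq_le_sq_mul_sq _ _ _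
  have hqA : q ≤ A0 := by
    by_contra hlt
    push Not at hlt
    have := hl2 i
    have h5 : q + A1 ≤ p + A0 := by linarith
    nlinarith
  have hsum : A0 + A1 ≤ ∑ j ∈ Finset.univ.erase i, l j := by
    have hsw : ∑ j ∈ Finset.univ.erase i, l j
        = ∑ x ∈ Z, ∑ j ∈ Finset.univ.erase i, (if x j = true then ‖c x‖ ^ 2 else 0)
        + ∑ x ∈ Z, ∑ j ∈ Finset.univ.erase i, (if x j = true then ‖c (u x)‖ ^ 2 else 0) := by
      simp_rw [hl]
      rw [Finset.sum_comm]
      rw [← Finset.sum_filter_add_sum_filter_not Finset.univ (fun x : Fin n → Bool => x i = false)]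
      congr 1
      simp only [Bool.not_eq_false]
      rw [Finset.sum_filter, hre]
      refine Finset.sum_congr rfl fun x _ => Finset.sum_congr rfl fun j hj => ?_
      have hj' : j ≠ i := by simpa using hj
      simp [u, hj']
    have hz : ∀ F : (Fin n → Bool) → ℝ, (∀ x, 0 ≤ F x) → ∑ x ∈ Z.erase o, F x ≤
        ∑ x ∈ Z, ∑ j ∈ Finset.univ.erase i, (if x j = true then F x else 0) := by
      intro F hF
      have hn : ∀ x j, 0 ≤ (if (x : Fin n → Bool) j = true then F x else 0) := by
        intro x j; split_ifs; exacts [hF x, le_rfl]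
      refine le_trans (Finset.sum_le_sum fun x hx => ?_)
        (Finset.sum_le_sum_of_subset_of_nonneg (Finset.erase_subset o Z)
          fun x _ _ => Finset.sum_nonneg fun j _ => hn x j)
      obtain ⟨hxo, hxZ⟩ := Finset.mem_erase.1 hx
      have hxi : x i = false := by simpa [Z] using hxZ
      obtain ⟨j, hj⟩ := Function.ne_iff.1 hxo
      have hj : x j = true := by simpa [o] using hj
      have hji : j ≠ i := by rintro rfl; simp [hxi] at hj
      have := Finset.single_le_sum (f := fun j => if x j = true then F x else 0)
        (fun j _ => hn x j) (Finset.mem_erase.2 ⟨hji, Finset.mem_univ j⟩)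
      simpa [hj] using this
    rw [hsw]
    exact add_le_add (hz (fun x => ‖c x‖ ^ 2) fun x => by positivity)
      (hz (fun x => ‖c (u x)‖ ^ 2) fun x => by positivity)
  linarith

/-- Parity of a bit string. -/
def par {n : ℕ} (x : Fin n → Bool) : ℤ := ∏ j, if x j = true then -1 else 1

lemma par_flip {n : ℕ} (x : Fin n → Bool) (i : Fin n) :
    par (Function.update x i (!x i)) = - par x := by
  unfold par
  rw [← Finset.mul_prod_erase _ _ (Finset.mem_univ i),
    ← Finset.mul_prod_erase Finset.univ (fun j => if x j = true then (-1 : ℤ) else 1)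
      (Finset.mem_univ i), ← neg_mul]
  congr 1
  · cases h : x i <;> simp
  · refine Finset.prod_congr rfl fun j hj => ?_
    have hj' : j ≠ i := by simpa using hj
    simp [hj']

lemma par_cases {n : ℕ} (x : Fin n → Bool) : par x = 1 ∨ par x = -1 := by
  unfold par
  refine Finset.prod_induction _ (fun z : ℤ => z = 1 ∨ z = -1) ?_ (Or.inl rfl) ?_
  · rintro a b (rfl | rfl) (rfl | rfl) <;> simp
  · intro j _; split_ifs <;> simp

/-- The indicator of a bit. -/
noncomputable def bit (b : Bool) : ℝ := if b = true then 1 else 0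

lemma exists_dist {n : ℕ} (hn : 2 ≤ n) (l : Fin n → ℝ) (h0 : ∀ i, 0 ≤ l i)
    (h2 : ∀ i, l i ≤ 1 / 2) (h : ∀ i, l i ≤ ∑ j ∈ Finset.univ.erase i, l j) :
    ∃ P : (Fin n → Bool) → ℝ, (∀ x, 0 ≤ P x) ∧ ∑ x, P x = 1 ∧ (∀ x, par x ≠ 1 → P x = 0) ∧
      ∀ i, ∑ x, P x * bit (x i) = l i := by
  let S : Set ((Fin n → Bool) → ℝ) :=
    stdSimplex ℝ (Fin n → Bool) ∩ {P | ∀ x, par x ≠ 1 → P x = 0}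
  have hScl : IsClosed {P : (Fin n → Bool) → ℝ | ∀ x, par x ≠ 1 → P x = 0} := by
    simp only [Set.ofPred_forall]
    exact isClosed_iInter fun x => isClosed_iInter fun _ =>
      isClosed_eq (continuous_apply x) continuous_const
  have hSc : IsCompact S := (isCompact_stdSimplex ℝ _).inter_right hScl
  have hSv : Convex ℝ S := by
    refine (convex_stdSimplex ℝ _).inter ?_
    intro P hP Q hQ a b _ _ _ x hx
    simp [hP x hx, hQ x hx]
  let L : ((Fin n → Bool) → ℝ) →ₗ[ℝ] (Fin n → ℝ) :=
    { toFun := fun P i => ∑ x, P x * bit (x i)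
      map_add' := by
        intro P Q; ext i; simp [add_mul, Finset.sum_add_distrib]
      map_smul' := by
        intro a P; ext i; simp [Finset.mul_sum, mul_assoc] }
  have hLc : Continuous L := L.continuous_of_finiteDimensional
  by_cases hmem : l ∈ L '' S
  · obtain ⟨P, hP, hPl⟩ := hmem
    exact ⟨P, hP.1.1, hP.1.2, hP.2, fun i => congrFun hPl i⟩
  exfalso
  obtain ⟨f, u, hf1, hf2⟩ := geometric_hahn_banach_closed_point
    (hSv.linear_image L) (hSc.image hLc).isClosed hmem
  let c : Fin n → ℝ := fun i => f (Pi.single i 1)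
  have hf : ∀ v : Fin n → ℝ, f v = ∑ i, c i * v i := by
    intro v
    conv_lhs => rw [pi_eq_sum_univ' v]
    rw [map_sum]
    refine Finset.sum_congr rfl fun i _ => ?_
    rw [map_smul, smul_eq_mul, mul_comm]
  have hx : ∀ x : Fin n → Bool, par x = 1 → ∑ i, c i * (bit (x i) - l i) < 0 := by
    intro x hpx
    have hv : L (Pi.single x 1) = fun i => bit (x i) := by
      ext i; simp [L, Pi.single_apply]
    have hm : L (Pi.single x 1) ∈ L '' S := by
      refine ⟨_, ⟨single_mem_stdSimplex ℝ x, ?_⟩, rfl⟩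
      intro y hy
      have : y ≠ x := by rintro rfl; exact hy hpx
      simp [this]
    have := (hf1 _ hm).trans hf2
    rw [hv, hf, hf] at this
    simp only [mul_sub, Finset.sum_sub_distrib]
    linarith
  let s : Fin n → Bool := fun i => decide (0 < c i)
  let y : Fin n → ℝ := fun i => if s i = true then 1 - l i else l i
  have hcy : ∀ i, c i * (bit (s i) - l i) = |c i| * y i := by
    intro i
    by_cases hc : 0 < c i
    · simp [y, s, bit, hc, abs_of_pos hc]
    · simp [y, s, bit, hc, abs_of_nonpos (not_lt.1 hc)]
  have hy0 : ∀ i, 0 ≤ y i := by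
    intro i; simp only [y]; split_ifs
    · linarith [h2 i]
    · exact h0 i
  rcases par_cases s with hs | hs
  · have := hx s hs
    simp_rw [hcy] at this
    exact absurd this (not_lt.2 (Finset.sum_nonneg fun i _ => mul_nonneg (abs_nonneg _) (hy0 i)))
  have hne : (Finset.univ : Finset (Fin n)).Nonempty := ⟨⟨0, by omega⟩, Finset.mem_univ _⟩
  obtain ⟨k, -, hk⟩ := Finset.exists_min_image Finset.univ (fun i => |c i|) hne
  have hfl := hx (Function.update s k (!s k)) (by rw [par_flip, hs]; rfl)
  have hsum : 1 ≤ ∑ i, y i := by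
    obtain ⟨i, hi⟩ : ∃ i, s i = true := by
      by_contra hno
      push Not at hno
      have : par s = 1 := Finset.prod_eq_one fun j _ => by simp [hno j]
      omega
    rw [← Finset.add_sum_erase _ _ (Finset.mem_univ i)]
    have hyi : y i = 1 - l i := by simp [y, hi]
    by_cases hj : ∃ j, j ≠ i ∧ s j = true
    · obtain ⟨j, hji, hj⟩ := hj
      have hyj : y j = 1 - l j := by simp [y, hj]
      have := Finset.single_le_sum (f := y) (fun j _ => hy0 j)
        (Finset.mem_erase.2 ⟨hji, Finset.mem_univ j⟩)
      linarith [h2 i, h2 j]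
    · push Not at hj
      have : ∑ j ∈ Finset.univ.erase i, y j = ∑ j ∈ Finset.univ.erase i, l j :=
        Finset.sum_congr rfl fun j hjm => by
          simp [y, hj j (Finset.ne_of_mem_erase hjm)]
      linarith [h i]
  have hflip : ∑ i, c i * (bit (Function.update s k (!s k) i) - l i)
      = ∑ i, |c i| * y i - |c k| := by
    rw [← Finset.add_sum_erase _ _ (Finset.mem_univ k),
      ← Finset.add_sum_erase _ (fun i => |c i| * y i) (Finset.mem_univ k)]
    have he : ∑ i ∈ Finset.univ.erase k, c i * (bit (Function.update s k (!s k) i) - l i)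
        = ∑ i ∈ Finset.univ.erase k, |c i| * y i :=
      Finset.sum_congr rfl fun j hj => by
        rw [Function.update_of_ne (Finset.ne_of_mem_erase hj), hcy]
    rw [he, ← hcy k, Function.update_self]
    by_cases hc : 0 < c k
    · simp [s, bit, hc, abs_of_pos hc]; ring
    · simp [s, bit, hc, abs_of_nonpos (not_lt.1 hc)]; ring
  rw [hflip] at hfl
  have h1 : |c k| * ∑ i, y i ≤ ∑ i, |c i| * y i := by
    rw [Finset.mul_sum]
    exact Finset.sum_le_sum fun i hi => mul_le_mul_of_nonneg_right (hk i hi) (hy0 i)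
  nlinarith [abs_nonneg (c k)]

lemma sufficiency {n : ℕ} (hn : 2 ≤ n) (l : Fin n → ℝ) (h0 : ∀ i, 0 ≤ l i)
    (h2 : ∀ i, l i ≤ 1 / 2) (h : ∀ i, l i ≤ ∑ j ∈ Finset.univ.erase i, l j) :
    ∃ c : (Fin n → Bool) → ℂ, ∀ i, qubitReduced i c = Matrix.diagonal (dg (l i)) := by
  obtain ⟨P, hP0, hP1, hPz, hPl⟩ := exists_dist hn l h0 h2 h
  refine ⟨fun x => (Real.sqrt (P x) : ℂ), fun i => ?_⟩
  have hoff : ∀ a, qubitReduced i (fun x => (Real.sqrt (P x) : ℂ)) a (!a) = 0 := by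
    intro a
    simp only [qubitReduced, Matrix.of_apply]
    refine Finset.sum_eq_zero fun x hx => ?_
    have hx : x i = a := by simpa using hx
    rw [← hx]
    by_cases hp : par x = 1
    · have : P (Function.update x i (!x i)) = 0 := hPz _ (by rw [par_flip, hp]; decide)
      simp [this]
    · simp [hPz x hp]
  have hon : ∀ a, qubitReduced i (fun x => (Real.sqrt (P x) : ℂ)) a a
      = ((∑ x : Fin n → Bool, if x i = a then P x else 0 : ℝ) : ℂ) := by
    intro a
    simp only [qubitReduced, Matrix.of_apply]
    rw [← Finset.sum_filter, Complex.ofReal_sum]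
    refine Finset.sum_congr rfl fun x hx => ?_
    have hx : x i = a := by simpa using hx
    rw [← hx, Function.update_eq_self, Complex.conj_ofReal, ← Complex.ofReal_mul,
      Real.mul_self_sqrt (hP0 x)]
  have ht : (∑ x : Fin n → Bool, if x i = true then P x else 0) = l i := by
    rw [← hPl i]
    exact Finset.sum_congr rfl fun x _ => by simp [bit]
  have hf : (∑ x : Fin n → Bool, if x i = false then P x else 0) = 1 - l i := by
    rw [← ht, ← hP1, ← Finset.sum_sub_distrib]
    exact Finset.sum_congr rfl fun x _ => by cases x i <;> simp
  ext a b
  cases a <;> cases b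
  · rw [hon, hf]; simp [dg]
  · rw [show true = !false from rfl, hoff]; simp
  · rw [show false = !true from rfl, hoff]; simp
  · rw [hon, ht]; simp [dg]

/-- Theorem 4 of the paper: polygon inequalities.
One-qubit density matrices `ρ_1, …, ρ_n` (`n ≥ 2`), with `λ_i` the smaller eigenvalue of
`ρ_i`, are the one-qubit reduced states of an `n`-qubit pure state if and only if
`λ_i ≤ Σ_{j≠i} λ_j` for every `i`. -/
theorem stmt_14 (n : ℕ) (hn : 2 ≤ n)
    (ρ : Fin n → Matrix Bool Bool ℂ)
    (hpsd : ∀ i, (ρ i).PosSemidef) (htr : ∀ i, (ρ i).trace = 1)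
    (lam : Fin n → ℝ)
    (hlam : ∀ i, lam i = min ((hpsd i).1.eigenvalues false) ((hpsd i).1.eigenvalues true)) :
    (∃ Ψ : (Fin n → Bool) → ℂ, star Ψ ⬝ᵥ Ψ = 1 ∧ ∀ i, ρ i = qubitReduced i Ψ) ↔
      ∀ i, lam i ≤ ∑ j ∈ Finset.univ.erase i, lam j := by
  choose V hV1 hV2 hV hl0 hl2 using fun i => exists_diag (ρ i) (hpsd i) (htr i) (lam i) (hlam i)
  constructor
  · rintro ⟨Ψ, -, hΨ⟩
    refine necessity (loc (fun i => (V i)ᴴ) Ψ) lam hl2 fun i => ?_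
    rw [red_loc _ (fun i => by rw [Matrix.conjTranspose_conjTranspose]; exact hV1 i), ← hΨ,
      hV i, Matrix.conjTranspose_conjTranspose]
    calc _ = ((V i)ᴴ * V i) * Matrix.diagonal (dg (lam i)) * ((V i)ᴴ * V i) := by
          simp only [Matrix.mul_assoc]
      _ = _ := by rw [hV2, Matrix.one_mul, Matrix.mul_one]
  · intro h
    obtain ⟨c, hc⟩ := sufficiency hn lam hl0 hl2 h
    have hr : ∀ i, ρ i = qubitReduced i (loc V c) := fun i => by
      rw [red_loc V hV2, hc, ← hV]
    refine ⟨loc V c, ?_, hr⟩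
    rw [red_trace ⟨0, by omega⟩, ← hr, htr]
end

section
/- Bravyi's conditions: let ρ_1 and ρ_2 be 2×2 density matrices with eigenvalues λ_a ≤ μ_a = 1 − λ_a (a = 1,2), and let ρ_3 be a 4×4 density matrix with eigenvalues λ_3 ≤ μ_3 ≤ ν_3 ≤ ξ_3 (summing to 1). Then ρ_1, ρ_2, ρ_3 are the reduced states of a pure state (unit vector) in ℂ^2 ⊗ ℂ^2 ⊗ ℂ^4 if and only if: λ_a ≥ λ_3 + μ_3 for a = 1,2; λ_1 + λ_2 ≥ 2λ_3 + μ_3 + ν_3; and |λ_1 − λ_2| ≤ min{ν_3 − λ_3, ξ_3 − μ_3}. -/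
open scoped Matrix ComplexOrder

namespace Bravyi

/-- `R1, R2, R3` are the reduced matrices of some vector. -/
def Good (R1 R2 : Matrix (Fin 2) (Fin 2) ℂ) (R3 : Matrix (Fin 4) (Fin 4) ℂ) : Prop :=
  ∃ Ψ : Fin 2 → Fin 2 → Fin 4 → ℂ,
    (∀ i i', R1 i i' = ∑ j, ∑ k, Ψ i j k * (starRingEnd ℂ) (Ψ i' j k)) ∧
    (∀ j j', R2 j j' = ∑ i, ∑ k, Ψ i j k * (starRingEnd ℂ) (Ψ i j' k)) ∧
    (∀ k k', R3 k k' = ∑ i, ∑ j, Ψ i j k * (starRingEnd ℂ) (Ψ i j k'))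

lemma Good.swap {R1 R2 R3} (h : Good R1 R2 R3) : Good R2 R1 R3 := by
  obtain ⟨Ψ, a, b, c⟩ := h
  refine ⟨fun i j k => Ψ j i k, b, a, fun k k' => ?_⟩
  rw [c, Finset.sum_comm]

lemma unitary_dot {n : Type*} [Fintype n] [DecidableEq n] (U : Matrix n n ℂ) (hU : Uᴴ * U = 1)
    (x y : n → ℂ) :
    ∑ i, (U *ᵥ x) i * (starRingEnd ℂ) ((U *ᵥ y) i) = ∑ i, x i * (starRingEnd ℂ) (y i) := by
  have h : (U *ᵥ x) ⬝ᵥ star (U *ᵥ y) = x ⬝ᵥ star y := by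
    rw [Matrix.star_mulVec, dotProduct_comm, ← Matrix.dotProduct_mulVec, Matrix.mulVec_mulVec, hU,
      Matrix.one_mulVec, dotProduct_comm]
  exact h

lemma conj_outer {n : Type*} [Fintype n] [DecidableEq n] (U : Matrix n n ℂ)
    (x : n → ℂ) (i i' : n) :
    (U *ᵥ x) i * (starRingEnd ℂ) ((U *ᵥ x) i') =
      (U * Matrix.vecMulVec x (star x) * Uᴴ) i i' := by
  rw [Matrix.mul_vecMulVec, Matrix.vecMulVec_mul, ← Matrix.star_mulVec]
  rfl

lemma Good.conj1 {R1 R2 R3} (h : Good R1 R2 R3) (U : Matrix (Fin 2) (Fin 2) ℂ)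
    (hU : Uᴴ * U = 1) : Good (U * R1 * Uᴴ) R2 R3 := by
  obtain ⟨Ψ, a, b, c⟩ := h
  refine ⟨fun i j k => (U *ᵥ (fun i' => Ψ i' j k)) i, fun i i' => ?_, fun j j' => ?_,
    fun k k' => ?_⟩
  · have : R1 = ∑ j, ∑ k, Matrix.vecMulVec (fun i' => Ψ i' j k) (star fun i' => Ψ i' j k) := by
      ext i i'
      simp only [a, Matrix.sum_apply, Matrix.vecMulVec_apply]
      rfl
    simp only [conj_outer]
    rw [this]
    simp only [Matrix.mul_sum, Matrix.sum_mul, Matrix.sum_apply]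
  · rw [b, Finset.sum_comm]
    conv_rhs => rw [Finset.sum_comm]
    simp only [unitary_dot U hU]
  · rw [c, Finset.sum_comm]
    conv_rhs => rw [Finset.sum_comm]
    simp only [unitary_dot U hU]

lemma Good.conj3 {R1 R2 R3} (h : Good R1 R2 R3) (U : Matrix (Fin 4) (Fin 4) ℂ)
    (hU : Uᴴ * U = 1) : Good R1 R2 (U * R3 * Uᴴ) := by
  obtain ⟨Ψ, a, b, c⟩ := h
  refine ⟨fun i j k => (U *ᵥ (Ψ i j)) k, fun i i' => ?_, fun j j' => ?_,
    fun k k' => ?_⟩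
  · rw [a]
    simp only [unitary_dot U hU]
  · rw [b]
    simp only [unitary_dot U hU]
  · have : R3 = ∑ i, ∑ j, Matrix.vecMulVec (Ψ i j) (star (Ψ i j)) := by
      ext i i'
      simp only [c, Matrix.sum_apply, Matrix.vecMulVec_apply]
      rfl
    simp only [conj_outer]
    rw [this]
    simp only [Matrix.mul_sum, Matrix.sum_mul, Matrix.sum_apply]

lemma exists_conj {n : Type*} [Fintype n] [DecidableEq n] {A B : Matrix n n ℂ}
    (hA : A.IsHermitian) (hB : B.IsHermitian) (h : A.charpoly = B.charpoly) :
    ∃ U : Matrix n n ℂ, Uᴴ * U = 1 ∧ U * Uᴴ = 1 ∧ B = U * A * Uᴴ := by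
  have e := (hA.eigenvalues_eq_eigenvalues_iff hB).2 h
  have sA := hA.spectral_theorem
  have sB := hB.spectral_theorem
  rw [Unitary.conjStarAlgAut_apply] at sA sB
  set V : Matrix n n ℂ := (hA.eigenvectorUnitary : Matrix n n ℂ) with hV
  set W : Matrix n n ℂ := (hB.eigenvectorUnitary : Matrix n n ℂ) with hW
  have v1 : Vᴴ * V = 1 := Unitary.coe_star_mul_self hA.eigenvectorUnitary
  have v2 : V * Vᴴ = 1 := Unitary.coe_mul_star_self hA.eigenvectorUnitary
  have w1 : Wᴴ * W = 1 := Unitary.coe_star_mul_self hB.eigenvectorUnitary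
  have w2 : W * Wᴴ = 1 := Unitary.coe_mul_star_self hB.eigenvectorUnitary
  rw [e] at sA
  set D := Matrix.diagonal ((RCLike.ofReal : ℝ → ℂ) ∘ hB.eigenvalues) with hD
  have sA' : A = V * D * Vᴴ := sA
  have sB' : B = W * D * Wᴴ := sB
  refine ⟨W * Vᴴ, ?_, ?_, ?_⟩
  · rw [Matrix.conjTranspose_mul, Matrix.conjTranspose_conjTranspose]
    calc V * Wᴴ * (W * Vᴴ) = V * (Wᴴ * W) * Vᴴ := by simp only [Matrix.mul_assoc]
      _ = 1 := by rw [w1, Matrix.mul_one, v2]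
  · rw [Matrix.conjTranspose_mul, Matrix.conjTranspose_conjTranspose]
    calc W * Vᴴ * (V * Wᴴ) = W * (Vᴴ * V) * Wᴴ := by simp only [Matrix.mul_assoc]
      _ = 1 := by rw [v1, Matrix.mul_one, w2]
  · rw [Matrix.conjTranspose_mul, Matrix.conjTranspose_conjTranspose]
    calc B = W * D * Wᴴ := sB'
      _ = W * (Vᴴ * V) * D * (Vᴴ * V) * Wᴴ := by rw [v1, Matrix.mul_one, Matrix.mul_one]
      _ = W * Vᴴ * (V * D * Vᴴ) * (V * Wᴴ) := by simp only [Matrix.mul_assoc]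
      _ = _ := by rw [← sA']

lemma Good.herm {R1 R2 R3} (h : Good R1 R2 R3) :
    R1.IsHermitian ∧ R2.IsHermitian ∧ R3.IsHermitian := by
  obtain ⟨Ψ, a, b, c⟩ := h
  refine ⟨?_, ?_, ?_⟩
  · ext i j
    simp only [Matrix.conjTranspose_apply, a, star_sum, star_mul', Complex.star_def,
      Complex.conj_conj, mul_comm]
  · ext i j
    simp only [Matrix.conjTranspose_apply, b, star_sum, star_mul', Complex.star_def,
      Complex.conj_conj, mul_comm]
  · ext i j
    simp only [Matrix.conjTranspose_apply, c, star_sum, star_mul', Complex.star_def,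
      Complex.conj_conj, mul_comm]

lemma Good.transfer {R1 R2 R3 S1 S2 S3} (h : Good R1 R2 R3)
    (h1 : S1.IsHermitian) (h2 : S2.IsHermitian) (h3 : S3.IsHermitian)
    (c1 : R1.charpoly = S1.charpoly) (c2 : R2.charpoly = S2.charpoly)
    (c3 : R3.charpoly = S3.charpoly) : Good S1 S2 S3 := by
  obtain ⟨g1, g2, g3⟩ := h.herm
  obtain ⟨U1, a1, -, rfl⟩ := exists_conj g1 h1 c1
  obtain ⟨U2, a2, -, rfl⟩ := exists_conj g2 h2 c2
  obtain ⟨U3, a3, -, rfl⟩ := exists_conj g3 h3 c3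
  exact (((h.conj1 U1 a1).swap.conj1 U2 a2).swap).conj3 U3 a3

lemma charpoly_two {A B : Matrix (Fin 2) (Fin 2) ℂ} (ht : A.trace = B.trace)
    (hd : A.det = B.det) : A.charpoly = B.charpoly := by
  rw [Matrix.charpoly_fin_two, Matrix.charpoly_fin_two, ht, hd]

/-- The diagonal one-qubit state. -/
noncomputable def D2 (l : ℝ) : Matrix (Fin 2) (Fin 2) ℂ := Matrix.diagonal ![(l : ℂ), 1 - (l : ℂ)]

/-- The diagonal four-level state. -/
noncomputable def D4 (l : Fin 4 → ℝ) : Matrix (Fin 4) (Fin 4) ℂ :=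
  Matrix.diagonal (fun i => (l i : ℂ))

lemma D2_herm (l : ℝ) : (D2 l).IsHermitian := by
  refine Matrix.isHermitian_diagonal_of_self_adjoint _ ?_
  ext i
  fin_cases i <;> simp

lemma D4_herm (l : Fin 4 → ℝ) : (D4 l).IsHermitian := by
  refine Matrix.isHermitian_diagonal_of_self_adjoint _ ?_
  ext i
  simp

lemma charpoly_D2 {ρ : Matrix (Fin 2) (Fin 2) ℂ} (h : ρ.IsHermitian) (t : ρ.trace = 1) (l : ℝ)
    (hl : l = min (h.eigenvalues 0) (h.eigenvalues 1)) : ρ.charpoly = (D2 l).charpoly := by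
  have ht := h.trace_eq_sum_eigenvalues
  have hd := h.det_eq_prod_eigenvalues
  rw [t, Fin.sum_univ_two] at ht
  rw [Fin.prod_univ_two] at hd
  simp only [Complex.coe_algebraMap] at ht hd
  apply charpoly_two
  · rw [t]; simp [D2, Matrix.trace, Fin.sum_univ_two]
  · rw [hd]
    simp only [D2, Matrix.det_diagonal, Fin.prod_univ_two, Matrix.cons_val_zero,
      Matrix.cons_val_one]
    rcases min_choice (h.eigenvalues 0) (h.eigenvalues 1) with e | e <;> rw [hl, e, ht] <;> ring

lemma charpoly_D4 {ρ : Matrix (Fin 4) (Fin 4) ℂ} (h : ρ.IsHermitian) (l : Fin 4 → ℝ)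
    (σ : Equiv.Perm (Fin 4)) (hl : ∀ i, l i = h.eigenvalues (σ i)) :
    ρ.charpoly = (D4 l).charpoly := by
  rw [h.charpoly_eq, D4, Matrix.charpoly_diagonal, ← Equiv.prod_comp σ]
  simp [hl]

/-- Eigenvector data of the two-qubit marginal. -/
structure Frame (R1 R2 : Matrix (Fin 2) (Fin 2) ℂ) (l : Fin 4 → ℝ)
    (w : Fin 2 → Fin 2 → Fin 4 → ℂ) : Prop where
  row : ∀ i j i' j', ∑ k, w i j k * (starRingEnd ℂ) (w i' j' k) = if i = i' ∧ j = j' then 1 else 0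
  col : ∀ k, ∑ i, ∑ j, Complex.normSq (w i j k) = 1
  red1 : ∀ i i', R1 i i' = ∑ j, ∑ k, (l k : ℂ) * (w i j k * (starRingEnd ℂ) (w i' j k))
  red2 : ∀ j j', R2 j j' = ∑ i, ∑ k, (l k : ℂ) * (w i j k * (starRingEnd ℂ) (w i j' k))

lemma Good.frame {R1 R2 l} (h : Good R1 R2 (D4 l)) : ∃ w, Frame R1 R2 l w := by
  obtain ⟨Ψ, a, b, c⟩ := h
  let e : Fin 2 × Fin 2 ≃ Fin 4 := finProdFinEquiv
  let A : Matrix (Fin 4) (Fin 4) ℂ := Matrix.of fun p k => Ψ (e.symm p).1 (e.symm p).2 k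
  have hc : (A * Aᴴ).charpoly = (D4 l).charpoly := by
    rw [Matrix.charpoly_mul_comm, ← Matrix.charpoly_transpose]
    congr 1
    ext k k'
    rw [c, Matrix.transpose_apply, Matrix.mul_apply, ← Equiv.sum_comp e, Fintype.sum_prod_type]
    simp [A, mul_comm]
  obtain ⟨U, u1, u2, hU⟩ := exists_conj (D4_herm l) (Matrix.isHermitian_mul_conjTranspose_self A)
    hc.symm
  have key : ∀ i j i' j', ∑ k, Ψ i j k * (starRingEnd ℂ) (Ψ i' j' k) =
      ∑ k, (l k : ℂ) * (U (e (i, j)) k * (starRingEnd ℂ) (U (e (i', j')) k)) := by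
    intro i j i' j'
    have := congrFun (congrFun hU (e (i, j))) (e (i', j'))
    rw [Matrix.mul_apply, Matrix.mul_apply] at this
    simp only [D4, Matrix.mul_diagonal, Matrix.conjTranspose_apply, A, Matrix.of_apply,
      Equiv.symm_apply_apply, Complex.star_def] at this
    rw [this]
    refine Finset.sum_congr rfl fun k _ => ?_
    ring
  refine ⟨fun i j k => U (e (i, j)) k, ?_, ?_, ?_, ?_⟩
  · intro i j i' j'
    have := congrFun (congrFun u2 (e (i, j))) (e (i', j'))
    rw [Matrix.mul_apply, Matrix.one_apply] at this
    simp only [Matrix.conjTranspose_apply, Complex.star_def, e.injective.eq_iff,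
      Prod.mk.injEq] at this
    exact this
  · intro k
    have := congrFun (congrFun u1 k) k
    rw [Matrix.mul_apply, Matrix.one_apply_eq, ← Equiv.sum_comp e, Fintype.sum_prod_type] at this
    simp only [Matrix.conjTranspose_apply, Complex.star_def, ← Complex.normSq_eq_conj_mul_self]
      at this
    exact_mod_cast this
  · intro i i'
    rw [a]
    exact Finset.sum_congr rfl fun j _ => key i j i' j
  · intro j j'
    rw [b]
    exact Finset.sum_congr rfl fun i _ => key i j i j'

lemma Frame.swap {R1 R2 l w} (h : Frame R1 R2 l w) : Frame R2 R1 l (fun i j k => w j i k) where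
  row i j i' j' := by rw [h.row]; simp only [and_comm]
  col k := by rw [Finset.sum_comm]; exact h.col k
  red1 := h.red2
  red2 := h.red1

/-- Overlap weights with the product vector given by `(α, β)` and `j`. -/
noncomputable def wt (w : Fin 2 → Fin 2 → Fin 4 → ℂ) (α β : ℂ) (j : Fin 2) (k : Fin 4) : ℝ :=
  Complex.normSq (α * w 0 j k + β * w 1 j k)

lemma wt_nonneg (w α β j k) : 0 ≤ wt w α β j k := Complex.normSq_nonneg _

lemma Frame.wt_sum {R1 R2 l w} (h : Frame R1 R2 l w) {α β : ℂ}
    (hn : Complex.normSq α + Complex.normSq β = 1) (j : Fin 2) : ∑ k, wt w α β j k = 1 := by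
  have h00 := h.row 0 j 0 j
  have h01 := h.row 0 j 1 j
  have h10 := h.row 1 j 0 j
  have h11 := h.row 1 j 1 j
  have hn' : α * (starRingEnd ℂ) α + β * (starRingEnd ℂ) β = 1 := by
    rw [Complex.mul_conj, Complex.mul_conj]; exact_mod_cast hn
  simp only [and_true, if_true, Fin.sum_univ_four, one_ne_zero, zero_ne_one, if_false]
    at h00 h01 h10 h11
  have : ((∑ k, wt w α β j k : ℝ) : ℂ) = 1 := by
    push_cast
    simp only [wt, ← Complex.mul_conj, Fin.sum_univ_four, map_add, map_mul]
    linear_combination α * (starRingEnd ℂ) α * h00 + α * (starRingEnd ℂ) β * h01 +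
      β * (starRingEnd ℂ) α * h10 + β * (starRingEnd ℂ) β * h11 + hn'
  exact_mod_cast this

lemma Frame.wt_red1 {l1 R2 l w} (h : Frame (D2 l1) R2 l w) (α β : ℂ) :
    ∑ j, ∑ k, l k * wt w α β j k =
      Complex.normSq α * l1 + Complex.normSq β * (1 - l1) := by
  have h00 := h.red1 0 0
  have h01 := h.red1 0 1
  have h10 := h.red1 1 0
  have h11 := h.red1 1 1
  simp [D2, Fin.sum_univ_four, Fin.sum_univ_two] at h00 h01 h10 h11
  have : ((∑ j, ∑ k, l k * wt w α β j k : ℝ) : ℂ) =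
      ((Complex.normSq α * l1 + Complex.normSq β * (1 - l1) : ℝ) : ℂ) := by
    push_cast
    simp only [wt, ← Complex.mul_conj, Fin.sum_univ_four, map_add, map_mul, Fin.sum_univ_two]
    linear_combination -α * (starRingEnd ℂ) α * h00 - α * (starRingEnd ℂ) β * h01 -
      β * (starRingEnd ℂ) α * h10 - β * (starRingEnd ℂ) β * h11
  exact_mod_cast this

lemma wt_compl (w) {α β : ℂ} (hn : Complex.normSq α + Complex.normSq β = 1) (j k) :
    wt w α β j k + wt w (-(starRingEnd ℂ) β) ((starRingEnd ℂ) α) j k =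
      Complex.normSq (w 0 j k) + Complex.normSq (w 1 j k) := by
  have : wt w α β j k + wt w (-(starRingEnd ℂ) β) ((starRingEnd ℂ) α) j k =
      (Complex.normSq α + Complex.normSq β) *
        (Complex.normSq (w 0 j k) + Complex.normSq (w 1 j k)) := by
    simp only [wt, Complex.normSq_apply, Complex.add_re, Complex.add_im, Complex.mul_re,
      Complex.mul_im, Complex.neg_re, Complex.neg_im, Complex.conj_re, Complex.conj_im]
    ring
  rw [this, hn, one_mul]

lemma Frame.wt_red2 {R1 l2 l w} (h : Frame R1 (D2 l2) l w) {α β : ℂ}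
    (hn : Complex.normSq α + Complex.normSq β = 1) :
    ∑ k, l k * (wt w α β 0 k + wt w (-(starRingEnd ℂ) β) ((starRingEnd ℂ) α) 0 k) = l2 := by
  simp only [wt_compl w hn]
  have h0 := h.red2 0 0
  simp only [D2, Matrix.diagonal_apply_eq, Matrix.cons_val_zero, Complex.mul_conj] at h0
  have h0' : l2 = ∑ i, ∑ k, l k * Complex.normSq (w i 0 k) := by exact_mod_cast h0
  rw [h0', Fin.sum_univ_two, ← Finset.sum_add_distrib]
  exact Finset.sum_congr rfl fun k _ => by ring

lemma exists_ker (a b : ℂ) : ∃ α β : ℂ,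
    Complex.normSq α + Complex.normSq β = 1 ∧ α * a + β * b = 0 := by
  by_cases h : Complex.normSq a + Complex.normSq b = 0
  · have ha : a = 0 := Complex.normSq_eq_zero.1 (by
      nlinarith [Complex.normSq_nonneg a, Complex.normSq_nonneg b])
    have hb : b = 0 := Complex.normSq_eq_zero.1 (by
      nlinarith [Complex.normSq_nonneg a, Complex.normSq_nonneg b])
    exact ⟨1, 0, by simp, by simp [ha, hb]⟩
  · set N := Complex.normSq a + Complex.normSq b with hN
    have hp : 0 < N := lt_of_le_of_ne
      (add_nonneg (Complex.normSq_nonneg a) (Complex.normSq_nonneg b)) (Ne.symm h)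
    refine ⟨b * ((Real.sqrt N)⁻¹ : ℝ), -a * ((Real.sqrt N)⁻¹ : ℝ), ?_, by ring⟩
    rw [Complex.normSq_mul, Complex.normSq_mul, Complex.normSq_neg, Complex.normSq_ofReal,
      ← mul_inv, Real.mul_self_sqrt hp.le, ← add_mul, add_comm, ← hN, mul_inv_cancel₀ h]

lemma avg_bounds {l n : Fin 4 → ℝ} (hm : Monotone l) (hn : ∀ k, 0 ≤ n k) (hs : ∑ k, n k = 1) :
    l 0 ≤ ∑ k, l k * n k ∧ ∑ k, l k * n k ≤ l 3 ∧
    (n 3 = 0 → ∑ k, l k * n k ≤ l 2) ∧ (n 0 = 0 → l 1 ≤ ∑ k, l k * n k) := by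
  have a : l 0 ≤ l 1 := hm (by decide)
  have b : l 1 ≤ l 2 := hm (by decide)
  have c : l 2 ≤ l 3 := hm (by decide)
  have n0 := hn 0
  have n1 := hn 1
  have n2 := hn 2
  have n3 := hn 3
  rw [Fin.sum_univ_four] at hs ⊢
  have e0 : n 0 = 1 - n 1 - n 2 - n 3 := by linarith
  refine ⟨?_, ?_, fun h => ?_, fun h => ?_⟩
  · rw [e0]; nlinarith [mul_nonneg n1 (sub_nonneg.2 a), mul_nonneg n2 (sub_nonneg.2 (a.trans b)),
      mul_nonneg n3 (sub_nonneg.2 (a.trans (b.trans c)))]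
  · have e3 : n 3 = 1 - n 1 - n 2 - n 0 := by linarith
    rw [e3]; nlinarith [mul_nonneg n2 (sub_nonneg.2 c), mul_nonneg n1 (sub_nonneg.2 (b.trans c)),
      mul_nonneg n0 (sub_nonneg.2 (a.trans (b.trans c)))]
  · have e2 : n 2 = 1 - n 1 - n 0 := by linarith
    rw [h, e2]; nlinarith [mul_nonneg n1 (sub_nonneg.2 b), mul_nonneg n0 (sub_nonneg.2 (a.trans b))]
  · have e1 : n 1 = 1 - n 2 - n 3 := by linarith
    rw [h, e1]; nlinarith [mul_nonneg n2 (sub_nonneg.2 b), mul_nonneg n3 (sub_nonneg.2 (b.trans c))]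

lemma Frame.diff {l1 l2 l w} (h : Frame (D2 l1) (D2 l2) l w) (hm : Monotone l) (h1 : l1 ≤ 1 / 2) :
    l1 - l2 ≤ l 2 - l 0 ∧ l1 - l2 ≤ l 3 - l 1 := by
  have main : ∀ α β : ℂ, Complex.normSq α + Complex.normSq β = 1 →
      l1 - l2 ≤ (∑ k, l k * wt w α β 1 k) -
        ∑ k, l k * wt w (-(starRingEnd ℂ) β) ((starRingEnd ℂ) α) 0 k := by
    intro α β hn
    have e1 := h.wt_red1 α β
    have e2 := h.wt_red2 hn
    simp only [mul_add, Finset.sum_add_distrib] at e2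
    rw [Fin.sum_univ_two] at e1
    have : l1 ≤ Complex.normSq α * l1 + Complex.normSq β * (1 - l1) := by
      have ea : Complex.normSq α = 1 - Complex.normSq β := by linarith
      rw [ea]
      nlinarith [mul_nonneg (Complex.normSq_nonneg β) (by linarith : 0 ≤ 1 - 2 * l1)]
    linarith
  have hn' : ∀ α β : ℂ, Complex.normSq α + Complex.normSq β = 1 →
      Complex.normSq (-(starRingEnd ℂ) β) + Complex.normSq ((starRingEnd ℂ) α) = 1 := by
    intro α β hn
    rw [Complex.normSq_neg, Complex.normSq_conj, Complex.normSq_conj, add_comm, hn]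
  constructor
  · obtain ⟨α, β, hn, hz⟩ := exists_ker (w 0 1 3) (w 1 1 3)
    have m := main α β hn
    have b1 := (avg_bounds hm (wt_nonneg w α β 1) (h.wt_sum hn 1)).2.2.1
      (by rw [wt, hz, map_zero])
    have b2 := (avg_bounds hm (wt_nonneg w _ _ 0) (h.wt_sum (hn' α β hn) 0)).1
    linarith
  · obtain ⟨γ, δ, hn, hz⟩ := exists_ker (w 0 0 0) (w 1 0 0)
    have hg : Complex.normSq ((starRingEnd ℂ) δ) + Complex.normSq (-(starRingEnd ℂ) γ) = 1 := by
      rw [Complex.normSq_neg, Complex.normSq_conj, Complex.normSq_conj, add_comm, hn]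
    have m := main _ _ hg
    simp only [map_neg, neg_neg, Complex.conj_conj] at m
    have b1 := (avg_bounds hm (wt_nonneg w _ _ 1) (h.wt_sum hg 1)).2.1
    have b2 := (avg_bounds hm (wt_nonneg w γ δ 0) (h.wt_sum hn 0)).2.2.2
      (by rw [wt, hz, map_zero])
    linarith

lemma Frame.diag1 {l1 R2 l w} (h : Frame (D2 l1) R2 l w) :
    l1 = ∑ j, ∑ k, l k * Complex.normSq (w 0 j k) := by
  have h0 := h.red1 0 0
  simp only [D2, Matrix.diagonal_apply_eq, Matrix.cons_val_zero, Complex.mul_conj] at h0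
  exact_mod_cast h0

lemma Frame.rown {R1 R2 l w} (h : Frame R1 R2 l w) (i j) :
    ∑ k, Complex.normSq (w i j k) = 1 := by
  have h0 := h.row i j i j
  simp only [and_self, if_true, Complex.mul_conj] at h0
  exact_mod_cast h0

lemma Frame.ge1 {l1 R2 l w} (h : Frame (D2 l1) R2 l w) (hm : Monotone l) : l 0 + l 1 ≤ l1 := by
  have a : l 0 ≤ l 1 := hm (by decide)
  have b : l 1 ≤ l 2 := hm (by decide)
  have c : l 2 ≤ l 3 := hm (by decide)
  have r0 := h.rown 0 0
  have r1 := h.rown 0 1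
  have c0 := h.col 0
  have q := fun i j k => Complex.normSq_nonneg (w i j k)
  rw [h.diag1]
  simp only [Fin.sum_univ_two, Fin.sum_univ_four] at *
  have hc : Complex.normSq (w 0 0 0) + Complex.normSq (w 0 1 0) ≤ 1 := by
    linarith [q 1 0 0, q 1 1 0]
  have f0 : Complex.normSq (w 0 0 1) = 1 - Complex.normSq (w 0 0 0) - Complex.normSq (w 0 0 2) -
    Complex.normSq (w 0 0 3) := by linarith
  have f1 : Complex.normSq (w 0 1 1) = 1 - Complex.normSq (w 0 1 0) - Complex.normSq (w 0 1 2) -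
    Complex.normSq (w 0 1 3) := by linarith
  rw [f0, f1]
  nlinarith [mul_nonneg (sub_nonneg.2 a) (sub_nonneg.2 hc),
    mul_nonneg (sub_nonneg.2 b) (q 0 0 2), mul_nonneg (sub_nonneg.2 b) (q 0 1 2),
    mul_nonneg (sub_nonneg.2 (b.trans c)) (q 0 0 3),
    mul_nonneg (sub_nonneg.2 (b.trans c)) (q 0 1 3)]

lemma Frame.sum_ge {l1 l2 l w} (h : Frame (D2 l1) (D2 l2) l w) (hm : Monotone l) :
    2 * l 0 + l 1 + l 2 ≤ l1 + l2 := by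
  have e1 := h.diag1
  have e2 := h.swap.diag1
  have b0 := (avg_bounds hm (fun k => Complex.normSq_nonneg (w 0 0 k)) (h.rown 0 0)).1
  have b1 := (avg_bounds hm (fun k => Complex.normSq_nonneg (w 1 1 k)) (h.rown 1 1)).2.1
  have c0 := h.col 0
  have c1 := h.col 1
  have c2 := h.col 2
  have c3 := h.col 3
  simp only [Fin.sum_univ_two, Fin.sum_univ_four] at *
  have : l1 + l2 = (l 0 + l 1 + l 2 + l 3) + (l 0 * Complex.normSq (w 0 0 0) +
      l 1 * Complex.normSq (w 0 0 1) + l 2 * Complex.normSq (w 0 0 2) +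
      l 3 * Complex.normSq (w 0 0 3)) - (l 0 * Complex.normSq (w 1 1 0) +
      l 1 * Complex.normSq (w 1 1 1) + l 2 * Complex.normSq (w 1 1 2) +
      l 3 * Complex.normSq (w 1 1 3)) := by
    rw [e1, e2]
    linear_combination l 0 * c0 + l 1 * c1 + l 2 * c2 + l 3 * c3
  linarith

lemma good_of_real (Φ : Fin 2 → Fin 2 → Fin 4 → ℝ) (l : Fin 4 → ℝ) (a b : ℝ) (A B : Fin 2 → Fin 2 → ℝ)
    (hA : ∀ i i', A i i' = ∑ j, ∑ k, Φ i j k * Φ i' j k)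
    (hB : ∀ j j', B j j' = ∑ i, ∑ k, Φ i j k * Φ i j' k)
    (hl : ∀ k k', (if k = k' then l k else 0) = ∑ i, ∑ j, Φ i j k * Φ i j k')
    (tA : A 0 0 + A 1 1 = 1) (tB : B 0 0 + B 1 1 = 1)
    (dA : A 0 0 * A 1 1 - A 0 1 * A 1 0 = a * (1 - a))
    (dB : B 0 0 * B 1 1 - B 0 1 * B 1 0 = b * (1 - b)) :
    Good (D2 a) (D2 b) (D4 l) := by
  have g : Good (Matrix.of fun i i' => ((A i i' : ℝ) : ℂ)) (Matrix.of fun i i' => ((B i i' : ℝ) : ℂ))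
      (D4 l) := by
    refine ⟨fun i j k => (Φ i j k : ℂ), fun i i' => ?_, fun j j' => ?_, fun k k' => ?_⟩
    · simp only [Matrix.of_apply, hA, Complex.conj_ofReal]; push_cast; rfl
    · simp only [Matrix.of_apply, hB, Complex.conj_ofReal]; push_cast; rfl
    · have := congrArg (fun x : ℝ => (x : ℂ)) (hl k k')
      simp only [D4, Matrix.diagonal_apply, Complex.conj_ofReal]
      push_cast at this
      rw [← this]
      split_ifs <;> simp
  refine g.transfer (D2_herm a) (D2_herm b) (D4_herm l) (charpoly_two ?_ ?_) (charpoly_two ?_ ?_) rfl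
  · simp only [Matrix.trace_fin_two, Matrix.of_apply, D2, Matrix.diagonal_apply_eq,
      Matrix.cons_val_zero, Matrix.cons_val_one]
    rw [add_sub_cancel]; exact_mod_cast tA
  · rw [D2, Matrix.det_diagonal, Fin.prod_univ_two, Matrix.det_fin_two]
    simp only [Matrix.of_apply, Matrix.cons_val_zero, Matrix.cons_val_one]
    exact_mod_cast dA
  · simp only [Matrix.trace_fin_two, Matrix.of_apply, D2, Matrix.diagonal_apply_eq,
      Matrix.cons_val_zero, Matrix.cons_val_one]
    rw [add_sub_cancel]; exact_mod_cast tB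
  · rw [D2, Matrix.det_diagonal, Fin.prod_univ_two, Matrix.det_fin_two]
    simp only [Matrix.of_apply, Matrix.cons_val_zero, Matrix.cons_val_one]
    exact_mod_cast dB

lemma seg {A B q : ℝ} (h1 : A ≤ q) (h2 : q ≤ B) :
    ∃ t : ℝ, 0 ≤ t ∧ t ≤ 1 ∧ q = A * (1 - t) + B * t := by
  rcases eq_or_lt_of_le (h1.trans h2) with h | h
  · exact ⟨0, le_rfl, zero_le_one, by linarith⟩
  · have hp : 0 < B - A := by linarith
    refine ⟨(q - A) / (B - A), div_nonneg (by linarith) hp.le,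
      (div_le_one hp).2 (by linarith), ?_⟩
    field_simp
    ring

lemma exists_sq {t : ℝ} (h : 0 ≤ t) : ∃ c : ℝ, c * c = t := ⟨√t, Real.mul_self_sqrt h⟩

lemma xstate {x y z w a b : ℝ} (hx : 0 ≤ x) (hy : 0 ≤ y) (hz : 0 ≤ z) (hw : 0 ≤ w)
    (hs : x + y + z + w = 1) (h1 : |1 - a - b| ≤ x - y) (h2 : |a - b| ≤ z - w) :
    Good (D2 a) (D2 b) (D4 ![x, y, z, w]) := by
  rw [abs_le] at h1 h2
  obtain ⟨t, t0, t1, ht⟩ := seg (A := y) (B := x) (q := (a + b - z - w) / 2)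
    (by linarith) (by linarith)
  obtain ⟨u, u0, u1, hu⟩ := seg (A := w) (B := z) (q := (a - b + z + w) / 2)
    (by linarith) (by linarith)
  obtain ⟨p, hp⟩ := exists_sq hx
  obtain ⟨q, hq⟩ := exists_sq hy
  obtain ⟨m, hm⟩ := exists_sq hz
  obtain ⟨n, hn⟩ := exists_sq hw
  obtain ⟨C, hC⟩ := exists_sq t0
  obtain ⟨S, hS⟩ := exists_sq (sub_nonneg.2 t1)
  obtain ⟨g, hg⟩ := exists_sq u0
  obtain ⟨h, hh⟩ := exists_sq (sub_nonneg.2 u1)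
  let Φ : Fin 2 → Fin 2 → Fin 4 → ℝ := ![![![p * C, -(q * S), 0, 0], ![0, 0, m * g, -(n * h)]],
    ![![0, 0, m * h, n * g], ![p * S, q * C, 0, 0]]]
  have ea : a = x * t + y * (1 - t) + (z * u + w * (1 - u)) := by linarith
  have eb : b = x * t + y * (1 - t) + (z + w - (z * u + w * (1 - u))) := by linarith
  refine good_of_real Φ _ a b ![![a, 0], ![0, 1 - a]] ![![b, 0], ![0, 1 - b]] ?_ ?_ ?_ ?_ ?_ ?_ ?_
  · intro i i'
    fin_cases i <;> fin_cases i' <;> simp [Φ, Fin.sum_univ_two, Fin.sum_univ_four]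
    · rw [ea]
      linear_combination (-C * C) * hp - x * hC - S * S * hq - y * hS - g * g * hm - z * hg
        - h * h * hn - w * hh
    · rw [ea]
      linear_combination (-S * S) * hp - x * hS - C * C * hq - y * hC - h * h * hm - z * hh
        - g * g * hn - w * hg - hs
  · intro i i'
    fin_cases i <;> fin_cases i' <;> simp [Φ, Fin.sum_univ_two, Fin.sum_univ_four]
    · rw [eb]
      linear_combination (-C * C) * hp - x * hC - S * S * hq - y * hS - h * h * hm - z * hh
        - g * g * hn - w * hg
    · rw [eb]
      linear_combination (-S * S) * hp - x * hS - C * C * hq - y * hC - g * g * hm - z * hg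
        - h * h * hn - w * hh - hs
  · intro i i'
    fin_cases i <;> fin_cases i' <;> simp [Φ, Fin.sum_univ_two, Fin.sum_univ_four]
    · linear_combination (-C * C - S * S) * hp - x * hC - x * hS
    · ring
    · ring
    · linear_combination (-C * C - S * S) * hq - y * hC - y * hS
    · linear_combination (-g * g - h * h) * hm - z * hg - z * hh
    · ring
    · ring
    · linear_combination (-g * g - h * h) * hn - w * hg - w * hh
  · simp
  · simp
  · simp
  · simp

lemma family {p1 p2 p3 p4 a b X τ : ℝ} (h1 : 0 ≤ p1) (h2 : 0 ≤ p2) (h3 : 0 ≤ p3) (h4 : 0 ≤ p4)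
    (hs : p1 + p2 + p3 + p4 = 1) (X0 : 0 ≤ X) (X1 : X ≤ 1) (τ0 : 0 ≤ τ) (τ1 : τ ≤ 1)
    (ha : (1 - 2 * a) ^ 2 = (1 - τ) * ((p1 - p4) * (2 * X - 1) - (p2 - p3)) ^ 2 +
      τ * (p1 + p4 - p2 - p3) ^ 2)
    (hb : (1 - 2 * b) ^ 2 = ((p1 - p4) * (2 * X - 1) + (p2 - p3)) ^ 2 +
      τ * ((p1 - p4) ^ 2 - ((p1 - p4) * (2 * X - 1)) ^ 2)) :
    Good (D2 a) (D2 b) (D4 ![p4, p3, p2, p1]) := by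
  obtain ⟨q1, e1⟩ := exists_sq h1
  obtain ⟨q2, e2⟩ := exists_sq h2
  obtain ⟨q3, e3⟩ := exists_sq h3
  obtain ⟨q4, e4⟩ := exists_sq h4
  obtain ⟨C, hC⟩ := exists_sq X0
  obtain ⟨S, hS⟩ := exists_sq (sub_nonneg.2 X1)
  obtain ⟨h, hh⟩ := exists_sq τ0
  obtain ⟨g, hg⟩ := exists_sq (sub_nonneg.2 τ1)
  let Φ : Fin 2 → Fin 2 → Fin 4 → ℝ :=
    ![![![-(q4 * S), 0, 0, q1 * C], ![-(q4 * C * h), q3 * g, 0, -(q1 * S * h)]],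
    ![![0, 0, q2, 0], ![q4 * C * g, q3 * h, 0, q1 * S * g]]]
  set K := p1 * (1 - X) + p4 * X with hK
  have hp2 : p2 = 1 - p1 - p3 - p4 := by linarith
  refine good_of_real Φ _ a b
    ![![p1 * X + p4 * (1 - X) + τ * K + p3 * (1 - τ), (p3 - K) * (g * h)],
      ![(p3 - K) * (g * h), p2 + (1 - τ) * K + p3 * τ]]
    ![![p1 * X + p4 * (1 - X) + p2, -(p1 - p4) * (C * S * h)],
      ![-(p1 - p4) * (C * S * h), K + p3]] ?_ ?_ ?_ ?_ ?_ ?_ ?_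
  · intro i i'
    fin_cases i <;> fin_cases i' <;> simp [Φ, Fin.sum_univ_two, Fin.sum_univ_four]
    · rw [hK, ← e1, ← e3, ← e4, ← hg, ← hS, ← hC, ← hh]; ring
    · rw [hK, ← e1, ← e3, ← e4, ← hS, ← hC]; ring
    · rw [hK, ← e1, ← e3, ← e4, ← hS, ← hC]; ring
    · rw [hK, ← e1, ← e2, ← e3, ← e4, ← hg, ← hS, ← hC, ← hh]; ring
  · intro i i'
    fin_cases i <;> fin_cases i' <;> simp [Φ, Fin.sum_univ_two, Fin.sum_univ_four]
    · rw [← e1, ← e2, ← e4, ← hS, ← hC]; ring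
    · rw [← e1, ← e4]; ring
    · rw [← e1, ← e4]; ring
    · rw [hK, ← e1, ← e3, ← e4, ← hS]
      linear_combination (-q4 * q4 * (h * h + g * g)) * hC - (q4 * q4 * X + q1 * q1 * S * S +
        q3 * q3) * (hh + hg)
  · have c1 : S * S + C * C = 1 := by linarith
    have c2 : g * g + h * h = 1 := by linarith
    intro i i'
    fin_cases i <;> fin_cases i' <;> simp [Φ, Fin.sum_univ_two, Fin.sum_univ_four]
    · rw [← e4]; linear_combination (-q4 * q4) * c1 - q4 * q4 * C * C * c2
    · ring
    · linear_combination (-q4 * q1 * S * C) * c2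
    · ring
    · rw [← e3]; linear_combination (-q3 * q3) * c2
    · ring
    · rw [← e2]
    · linear_combination (-q4 * q1 * S * C) * c2
    · ring
    · rw [← e1]; linear_combination (-q1 * q1) * c1 - q1 * q1 * S * S * c2
  · simp; rw [hK]; linarith
  · simp; rw [hK]; linarith
  · simp
    have e : (p3 - K) * (g * h) * ((p3 - K) * (g * h)) = (p3 - K) ^ 2 * ((1 - τ) * τ) := by
      rw [← hg, ← hh]; ring
    rw [e, hK]
    rw [hp2] at ha ⊢
    linear_combination (1 / 4) * ha
  · simp
    have e : (p1 - p4) * (C * S * h) * ((p1 - p4) * (C * S * h)) =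
        (p1 - p4) ^ 2 * (X * (1 - X) * τ) := by
      linear_combination (p1 - p4) ^ 2 * (S * S * h * h * hC + X * h * h * hS + X * (1 - X) * hh)
    have e' : (p4 - p1) * (C * S * h) * ((p4 - p1) * (C * S * h)) =
        (p1 - p4) ^ 2 * (X * (1 - X) * τ) := by
      rw [← e]; ring
    first | rw [e, hK] | rw [e', hK]
    rw [hp2] at hb ⊢
    linear_combination (1 / 4) * hb

lemma solve {d k D r s : ℝ} (hk : 0 ≤ k) (hkd : k ≤ d) (hr : 0 ≤ r)
    (hDr : |D| ≤ r) (hrs : r ≤ s - 2 * k) (hsd : s ≤ d + k) (hsmall : s ≤ d - k → 2 * k ≤ r) :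
    ∃ y τ : ℝ, -d ≤ y ∧ y ≤ d ∧ 0 ≤ τ ∧ τ ≤ 1 ∧ r ^ 2 = (1 - τ) * (y - k) ^ 2 + τ * D ^ 2 ∧
      s ^ 2 = (y + k) ^ 2 + τ * (d ^ 2 - y ^ 2) := by
  have hD : D ^ 2 ≤ r ^ 2 := by rw [← sq_abs D]; exact pow_le_pow_left₀ (abs_nonneg D) hDr 2
  rcases eq_or_lt_of_le hsd with hs | hs
  · have : r ^ 2 ≤ (d - k) ^ 2 := pow_le_pow_left₀ hr (by linarith) 2
    obtain ⟨t, t0, t1, ht⟩ := seg hD this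
    exact ⟨d, 1 - t, by linarith, le_rfl, by linarith, by linarith, by rw [ht]; ring,
      by rw [hs]; ring⟩
  · have key : ∃ L : ℝ, -d < L ∧ L ≤ s - k ∧ -s ≤ L + k ∧ s ^ 2 ≤ d ^ 2 + k ^ 2 + 2 * k * L ∧
        (L - k) ^ 2 * (d ^ 2 - L ^ 2) + (s ^ 2 - (L + k) ^ 2) * (D ^ 2 - (L - k) ^ 2)
          - r ^ 2 * (d ^ 2 - L ^ 2) ≤ 0 := by
      rcases le_or_gt s (d - k) with hc | hc
      · have h2 := hsmall hc
        have hkd' : k < d := by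
          rcases eq_or_lt_of_le hkd with h | h
          · exfalso; linarith
          · exact h
        have hE : s ^ 2 ≤ d ^ 2 - k ^ 2 := by nlinarith
        refine ⟨-k, by linarith, by linarith, by linarith, by nlinarith, ?_⟩
        have h4 : 4 * k ^ 2 ≤ r ^ 2 := by nlinarith
        nlinarith [mul_nonneg (sub_nonneg.2 h4) (sub_nonneg.2 hE),
          mul_nonneg (sub_nonneg.2 hD) (sq_nonneg s)]
      · have hk0 : 0 < k := by linarith
        set L := (s ^ 2 - k ^ 2 - d ^ 2) / (2 * k) with hL
        have hLe : 2 * k * L = s ^ 2 - k ^ 2 - d ^ 2 := by rw [hL]; field_simp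
        have hLd : -d < L := by
          rw [hL, lt_div_iff₀ (by linarith)]; nlinarith
        have hLs : L ≤ s - k := by
          rw [hL, div_le_iff₀ (by linarith)]; nlinarith
        refine ⟨L, hLd, hLs, by linarith, by linarith, ?_⟩
        have e : s ^ 2 - (L + k) ^ 2 = d ^ 2 - L ^ 2 := by linarith
        rw [e]
        have hp : 0 ≤ d ^ 2 - L ^ 2 := by nlinarith
        nlinarith [mul_nonneg (sub_nonneg.2 hD) hp]
    obtain ⟨L, l1, l2, l3, l4, l5⟩ := key
    have hcont : ContinuousOn (fun y : ℝ => (y - k) ^ 2 * (d ^ 2 - y ^ 2) +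
        (s ^ 2 - (y + k) ^ 2) * (D ^ 2 - (y - k) ^ 2) - r ^ 2 * (d ^ 2 - y ^ 2))
        (Set.Icc L (s - k)) := by fun_prop
    have htop : 0 ≤ (s - k - k) ^ 2 * (d ^ 2 - (s - k) ^ 2) +
        (s ^ 2 - (s - k + k) ^ 2) * (D ^ 2 - (s - k - k) ^ 2) - r ^ 2 * (d ^ 2 - (s - k) ^ 2) := by
      have hp : 0 ≤ d ^ 2 - (s - k) ^ 2 := by nlinarith
      have hq : r ^ 2 ≤ (s - 2 * k) ^ 2 := pow_le_pow_left₀ hr hrs 2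
      nlinarith [mul_nonneg (sub_nonneg.2 hq) hp]
    obtain ⟨y, ⟨y1, y2⟩, hy⟩ := intermediate_value_Icc l2 hcont ⟨l5, htop⟩
    simp only at hy
    have hpos : 0 < d ^ 2 - y ^ 2 := by nlinarith
    have hne := hpos.ne'
    refine ⟨y, (s ^ 2 - (y + k) ^ 2) / (d ^ 2 - y ^ 2), by linarith, by linarith,
      div_nonneg (by nlinarith) hpos.le, (div_le_one hpos).2 (by nlinarith), ?_, ?_⟩
    · field_simp
      linear_combination -hy
    · field_simp
      ring

lemma D4_charpoly (x y z w : ℝ) : (D4 ![x, y, z, w]).charpoly =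
    (Polynomial.X - Polynomial.C (x : ℂ)) * (Polynomial.X - Polynomial.C (y : ℂ)) *
    (Polynomial.X - Polynomial.C (z : ℂ)) * (Polynomial.X - Polynomial.C (w : ℂ)) := by
  rw [D4, Matrix.charpoly_diagonal, Fin.prod_univ_four]
  simp

lemma suff {p1 p2 p3 p4 a b : ℝ} (h4 : 0 ≤ p4) (h43 : p4 ≤ p3) (h32 : p3 ≤ p2) (h21 : p2 ≤ p1)
    (hs : p1 + p2 + p3 + p4 = 1) (ha : a ≤ 1 / 2) (hab : b ≤ a)
    (c2 : p3 + p4 ≤ b) (c3 : 2 * p4 + p3 + p2 ≤ a + b)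
    (c4 : a - b ≤ p2 - p4) (c5 : a - b ≤ p1 - p3) :
    Good (D2 a) (D2 b) (D4 ![p4, p3, p2, p1]) := by
  have h3 : 0 ≤ p3 := h4.trans h43
  have h2 : 0 ≤ p2 := h3.trans h32
  have h1 : 0 ≤ p1 := h2.trans h21
  have fin : ∀ x y z w : ℝ, (D4 ![x, y, z, w]).charpoly = (D4 ![p4, p3, p2, p1]).charpoly →
      Good (D2 a) (D2 b) (D4 ![x, y, z, w]) → Good (D2 a) (D2 b) (D4 ![p4, p3, p2, p1]) :=
    fun x y z w hc g => g.transfer (D2_herm a) (D2_herm b) (D4_herm _) rfl rfl hc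
  rcases le_or_gt (a - b) (p2 - p3) with hv | hv
  · refine fin p1 p4 p2 p3 (by simp only [D4_charpoly]; ring)
      (xstate h1 h4 h2 h3 (by linarith) ?_ ?_) <;> rw [abs_le] <;> constructor <;> linarith
  rcases le_or_gt (1 - a - b) (p1 - p3) with hu | hu
  · rcases le_or_gt (1 - a - b) (p2 - p4) with hu' | hu'
    · refine fin p2 p4 p1 p3 (by simp only [D4_charpoly]; ring)
        (xstate h2 h4 h1 h3 (by linarith) ?_ ?_) <;> rw [abs_le] <;> constructor <;> linarith
    · refine fin p1 p3 p2 p4 (by simp only [D4_charpoly]; ring)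
        (xstate h1 h3 h2 h4 (by linarith) ?_ ?_) <;> rw [abs_le] <;> constructor <;> linarith
  rcases le_or_gt (1 - a - b) (p2 - p4) with hu' | hu'
  · refine fin p2 p4 p1 p3 (by simp only [D4_charpoly]; ring)
      (xstate h2 h4 h1 h3 (by linarith) ?_ ?_) <;> rw [abs_le] <;> constructor <;> linarith
  have hD : |p1 + p4 - p2 - p3| ≤ 1 - 2 * a := by
    rw [abs_le]; constructor <;> linarith
  obtain ⟨y, τ, y0, y1, τ0, τ1, er, es⟩ := solve (d := p1 - p4) (k := p2 - p3)
    (D := p1 + p4 - p2 - p3) (r := 1 - 2 * a) (s := 1 - 2 * b) (by linarith) (by linarith)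
    (by linarith) hD (by linarith) (by linarith) (by intro h; linarith)
  obtain ⟨X, X0, X1, hX⟩ := seg y0 y1
  have hy : y = (p1 - p4) * (2 * X - 1) := by rw [hX]; ring
  rw [hy] at er es
  exact family h1 h2 h3 h4 hs X0 X1 τ0 τ1 er es

end Bravyi

/-- Bravyi's conditions.  Let `ρ1, ρ2` be one-qubit density matrices
with smaller eigenvalues `l1, l2` (the larger ones being `1 - l1`, `1 - l2`), and let
`ρ3` be a `4×4` density matrix with ascending eigenvalue list `l3 0 ≤ l3 1 ≤ l3 2 ≤ l3 3`.
Then `ρ1, ρ2, ρ3` are the reduced states of a pure state in `ℂ² ⊗ ℂ² ⊗ ℂ⁴` if and only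
if `l1 ≥ l3 0 + l3 1`, `l2 ≥ l3 0 + l3 1`, `l1 + l2 ≥ 2·l3 0 + l3 1 + l3 2`, and
`|l1 - l2| ≤ min (l3 2 - l3 0) (l3 3 - l3 1)`. -/
theorem stmt_16 (ρ1 ρ2 : Matrix (Fin 2) (Fin 2) ℂ) (ρ3 : Matrix (Fin 4) (Fin 4) ℂ)
    (h1 : ρ1.PosSemidef) (h2 : ρ2.PosSemidef) (h3 : ρ3.PosSemidef)
    (t1 : ρ1.trace = 1) (t2 : ρ2.trace = 1) (t3 : ρ3.trace = 1)
    (l1 l2 : ℝ)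
    (hl1 : l1 = min (h1.1.eigenvalues 0) (h1.1.eigenvalues 1))
    (hl2 : l2 = min (h2.1.eigenvalues 0) (h2.1.eigenvalues 1))
    (l3 : Fin 4 → ℝ) (hmono : Monotone l3)
    (heig : ∃ σ : Equiv.Perm (Fin 4), ∀ i, l3 i = h3.1.eigenvalues (σ i)) :
    (∃ Ψ : Fin 2 → Fin 2 → Fin 4 → ℂ,
        (∑ i, ∑ j, ∑ k, Complex.normSq (Ψ i j k)) = 1 ∧
        (∀ i i', ρ1 i i' = ∑ j, ∑ k, Ψ i j k * (starRingEnd ℂ) (Ψ i' j k)) ∧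
        (∀ j j', ρ2 j j' = ∑ i, ∑ k, Ψ i j k * (starRingEnd ℂ) (Ψ i j' k)) ∧
        (∀ k k', ρ3 k k' = ∑ i, ∑ j, Ψ i j k * (starRingEnd ℂ) (Ψ i j k'))) ↔
      (l1 ≥ l3 0 + l3 1 ∧ l2 ≥ l3 0 + l3 1 ∧
       l1 + l2 ≥ 2 * l3 0 + l3 1 + l3 2 ∧
       |l1 - l2| ≤ min (l3 2 - l3 0) (l3 3 - l3 1)) := by
  have i1 := h1.1.trace_eq_sum_eigenvalues
  have i2 := h2.1.trace_eq_sum_eigenvalues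
  have i3 := h3.1.trace_eq_sum_eigenvalues
  rw [t1, Fin.sum_univ_two] at i1
  rw [t2, Fin.sum_univ_two] at i2
  obtain ⟨σ, hσ⟩ := heig
  rw [t3, ← Equiv.sum_comp σ] at i3
  simp only [← hσ, Fin.sum_univ_four] at i3
  simp only [Complex.coe_algebraMap] at i1 i2 i3
  have i1' : 1 = h1.1.eigenvalues 0 + h1.1.eigenvalues 1 := by exact_mod_cast i1
  have i2' : 1 = h2.1.eigenvalues 0 + h2.1.eigenvalues 1 := by exact_mod_cast i2
  have i3' : 1 = l3 0 + l3 1 + l3 2 + l3 3 := by exact_mod_cast i3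
  have b1 : l1 ≤ 1 / 2 := by
    have u := min_le_left (h1.1.eigenvalues 0) (h1.1.eigenvalues 1)
    have v := min_le_right (h1.1.eigenvalues 0) (h1.1.eigenvalues 1)
    linarith
  have b2 : l2 ≤ 1 / 2 := by
    have u := min_le_left (h2.1.eigenvalues 0) (h2.1.eigenvalues 1)
    have v := min_le_right (h2.1.eigenvalues 0) (h2.1.eigenvalues 1)
    linarith
  have n0 : 0 ≤ l3 0 := by rw [hσ]; exact h3.eigenvalues_nonneg _
  have m0 : l3 0 ≤ l3 1 := hmono (by decide)
  have m1 : l3 1 ≤ l3 2 := hmono (by decide)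
  have m2 : l3 2 ≤ l3 3 := hmono (by decide)
  have k1 := Bravyi.charpoly_D2 h1.1 t1 l1 hl1
  have k2 := Bravyi.charpoly_D2 h2.1 t2 l2 hl2
  have k3 := Bravyi.charpoly_D4 h3.1 l3 σ hσ
  constructor
  · rintro ⟨Ψ, -, a, b, c⟩
    have g : Bravyi.Good (Bravyi.D2 l1) (Bravyi.D2 l2) (Bravyi.D4 l3) :=
      Bravyi.Good.transfer ⟨Ψ, a, b, c⟩ (Bravyi.D2_herm _) (Bravyi.D2_herm _) (Bravyi.D4_herm _)
        k1 k2 k3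
    obtain ⟨w, hw⟩ := g.frame
    have d1 := hw.diff hmono b1
    have d2 := hw.swap.diff hmono b2
    refine ⟨hw.ge1 hmono, hw.swap.ge1 hmono, hw.sum_ge hmono, ?_⟩
    rw [abs_le, neg_le, neg_sub, le_min_iff, le_min_iff]
    exact ⟨d2, d1⟩
  · rintro ⟨c1, c2, c3, c4⟩
    rw [abs_le, neg_le, neg_sub, le_min_iff, le_min_iff] at c4
    obtain ⟨⟨c5, c6⟩, c7, c8⟩ := c4
    have el : l3 = ![l3 0, l3 1, l3 2, l3 3] := by
      ext i; fin_cases i <;> rfl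
    have g : Bravyi.Good (Bravyi.D2 l1) (Bravyi.D2 l2) (Bravyi.D4 l3) := by
      rw [el]
      rcases le_total l2 l1 with h | h
      · exact Bravyi.suff n0 m0 m1 m2 (by linarith) b1 h (by linarith) (by linarith) c7 c8
      · exact (Bravyi.suff n0 m0 m1 m2 (by linarith) b2 h (by linarith) (by linarith) c5 c6).swap
    obtain ⟨Ψ, a, b, c⟩ := g.transfer h1.1 h2.1 h3.1 k1.symm k2.symm k3.symm
    refine ⟨Ψ, ?_, a, b, c⟩
    have ht := t1
    rw [Matrix.trace, Fin.sum_univ_two] at ht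
    simp only [Matrix.diag_apply, a, Complex.mul_conj] at ht
    rw [Fin.sum_univ_two]
    exact_mod_cast ht
end
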